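/- arXiv:2011.12223 — 3 statements merged into one kernel-verified Lean document; each statement's English description precedes it below -/
import Mathlib

section
/- For every linear subspace W ⊆ ⋀²V₅ and every symmetric bilinear form q : W × W → ℂ, the set A(W,q) is a Lagrangian subspace of (⋀³V₆, ω): it is a linear subspace of dimension 10 on which ω vanishes identically. Moreover A(W,q) ∩ ⋀³V₅ = {η ∈ ⋀³V₅ : vol(x∧η∧w′) = 0 for all w′ ∈ W}, which is a subspace of dimension 10 − dim W. -/
open ExteriorAlgebra Module

noncomputable section

namespace EPW

variable (V : Type) [AddCommGroup V] [Module ℂ V]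

/-- A volume form `vol : ⋀ᵏV → ℂ` extended to the whole exterior algebra by composing with
the projection onto the degree-`k` graded component; on `⋀ᵏV` it agrees with `vol`. -/
def volC (k : ℕ) (vol : ⋀[ℂ]^k V →ₗ[ℂ] ℂ) : ExteriorAlgebra ℂ V →ₗ[ℂ] ℂ :=
  vol ∘ₗ (DirectSum.component ℂ ℕ (fun i => ↥(⋀[ℂ]^i V)) k) ∘ₗ
    (DirectSum.decomposeLinearEquiv (fun i : ℕ => ⋀[ℂ]^i V)).toLinearMap

/-- `F_v = v ∧ ⋀²V₆ = {v ∧ η : η ∈ ⋀²V₆}`. -/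
def Fv (v : V) : Submodule ℂ (ExteriorAlgebra ℂ V) :=
  Submodule.map (LinearMap.mulLeft ℂ (ExteriorAlgebra.ι ℂ v)) (⋀[ℂ]^2 V)

/-- The image of `⋀ᵏW` inside the exterior algebra of `V`, for a subspace `W ⊆ V`. -/
def extPow (W : Submodule ℂ V) (k : ℕ) : Submodule ℂ (ExteriorAlgebra ℂ V) :=
  (Submodule.map (ExteriorAlgebra.ι ℂ) W) ^ k

/-- The Lagrangian subspace `A(W,q)` associated to a subspace `W ⊆ ⋀²V₅` and a bilinear
form `q` on `W`:  `A(W,q) = {η + x∧w : w ∈ W, η ∈ ⋀³V₅, vol(x∧η∧w') = -q(w,w') ∀ w' ∈ W}`. -/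
def AWq (vol : ⋀[ℂ]^6 V →ₗ[ℂ] ℂ) (x : V) (V₅ : Submodule ℂ V)
    (W : Submodule ℂ (ExteriorAlgebra ℂ V)) (q : W →ₗ[ℂ] W →ₗ[ℂ] ℂ) :
    Submodule ℂ (ExteriorAlgebra ℂ V) where
  carrier := {z | ∃ w : W, ∃ η ∈ extPow V V₅ 3,
    z = η + ExteriorAlgebra.ι ℂ x * (w : ExteriorAlgebra ℂ V) ∧
    ∀ w' : W, volC V 6 vol (ExteriorAlgebra.ι ℂ x * η * (w' : ExteriorAlgebra ℂ V)) = - q w w'}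
  add_mem' := by
    rintro a b ⟨w, η, hη, rfl, hc⟩ ⟨w', η', hη', rfl, hc'⟩
    refine ⟨w + w', η + η', add_mem hη hη', ?_, ?_⟩
    · rw [Submodule.coe_add, mul_add]
      abel
    · intro w₀
      have h1 : ExteriorAlgebra.ι ℂ x * (η + η') * (w₀ : ExteriorAlgebra ℂ V)
          = ExteriorAlgebra.ι ℂ x * η * (w₀ : ExteriorAlgebra ℂ V)
            + ExteriorAlgebra.ι ℂ x * η' * (w₀ : ExteriorAlgebra ℂ V) := by
        rw [mul_add, add_mul]
      rw [h1, map_add, hc w₀, hc' w₀, map_add, LinearMap.add_apply]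
      ring
  zero_mem' := by
    refine ⟨0, 0, zero_mem _, by simp, ?_⟩
    intro w'
    simp
  smul_mem' := by
    rintro c a ⟨w, η, hη, rfl, hc⟩
    refine ⟨c • w, c • η, Submodule.smul_mem _ c hη, ?_, ?_⟩
    · rw [Submodule.coe_smul, smul_add, mul_smul_comm]
    · intro w₀
      have h1 : ExteriorAlgebra.ι ℂ x * (c • η) * (w₀ : ExteriorAlgebra ℂ V)
          = c • (ExteriorAlgebra.ι ℂ x * η * (w₀ : ExteriorAlgebra ℂ V)) := by
        rw [mul_smul_comm, smul_mul_assoc]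
      rw [h1, map_smul, hc w₀, map_smul, LinearMap.smul_apply, smul_eq_mul, smul_eq_mul]
      ring

end EPW

namespace EPW

section helpers

variable {V : Type} [AddCommGroup V] [Module ℂ V]

lemma extPow_eq_map (U : Submodule ℂ V) (k : ℕ) :
    extPow V U k = Submodule.map (ExteriorAlgebra.map U.subtype).toLinearMap (⋀[ℂ]^k U) := by
  unfold extPow exteriorPower
  rw [Submodule.map_pow, ExteriorAlgebra.ι_range_map_map, Submodule.range_subtype]

lemma map_subtype_injective (U : Submodule ℂ V) :
    Function.Injective (ExteriorAlgebra.map U.subtype).toLinearMap :=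
  ExteriorAlgebra.map_injective_field (Submodule.ker_subtype U)

lemma finrank_extPow (U : Submodule ℂ V) [FiniteDimensional ℂ U] (k : ℕ) :
    finrank ℂ (extPow V U k) = (finrank ℂ U).choose k := by
  rw [extPow_eq_map, ← exteriorPower.finrank_eq ℂ k]
  exact (Submodule.equivMapOfInjective _ (map_subtype_injective U) _).finrank_eq.symm

lemma finite_extPow (U : Submodule ℂ V) [FiniteDimensional ℂ U] (k : ℕ) :
    FiniteDimensional ℂ (extPow V U k) := by
  rw [extPow_eq_map]
  infer_instance

lemma extPow_le (U : Submodule ℂ V) (k : ℕ) : extPow V U k ≤ ⋀[ℂ]^k V := by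
  unfold extPow exteriorPower
  exact pow_le_pow_left' LinearMap.map_le_range k

lemma extPow_span (U : Submodule ℂ V) (b : Basis (Fin 5) ℂ U) (k : ℕ) :
    extPow V U k = Submodule.span ℂ
      (Set.range (ExteriorAlgebra.ιMulti_family ℂ k (fun i => (b i : V)))) := by
  rw [extPow_eq_map, ← exteriorPower.ιMulti_family_span_fixedDegree_of_span ℂ b.span_eq,
    Submodule.map_span, ← Set.range_comp]
  congr 2
  ext s
  simp only [Function.comp_apply, AlgHom.toLinearMap_apply, ExteriorAlgebra.map_apply_ιMulti]
  rfl

lemma volC_apply (k : ℕ) (vol : ⋀[ℂ]^k V →ₗ[ℂ] ℂ) (z : ⋀[ℂ]^k V) :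
    volC V k vol (z : ExteriorAlgebra ℂ V) = vol z := by
  simp only [volC, LinearMap.comp_apply, LinearEquiv.coe_coe,
    DirectSum.decomposeLinearEquiv_apply, DirectSum.decompose_coe]
  congr 1
  exact DirectSum.component.lof_self ℂ (M := fun i : ℕ => ↥(⋀[ℂ]^i V)) k z

/-- one-sided nondegeneracy -/
lemma nondeg (v : Fin 5 → V) (L : ExteriorAlgebra ℂ V →ₗ[ℂ] ℂ)
    (hL : ∀ s, L (ExteriorAlgebra.ιMulti_family ℂ (3 + 2) v s) ≠ 0)
    (w : ExteriorAlgebra ℂ V)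
    (hw : w ∈ Submodule.span ℂ (Set.range (ExteriorAlgebra.ιMulti_family ℂ 2 v)))
    (h : ∀ s, L (ExteriorAlgebra.ιMulti_family ℂ 3 v s * w) = 0) : w = 0 := by
  classical
  rw [Submodule.mem_span_range_iff_exists_fun] at hw
  obtain ⟨c, rfl⟩ := hw
  apply Finset.sum_eq_zero
  intro s _
  have hc : 3 + 2 = Fintype.card (Fin 5) := by simp
  have hd : Disjoint (Set.powersetCard.compl hc s).val s.val := by
    exact disjoint_compl_left
  have := h (Set.powersetCard.compl hc s)
  rw [Finset.mul_sum, Finset.sum_eq_single s] at this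
  · rw [mul_smul_comm, ExteriorAlgebra.ιMulti_family_mul_of_disjoint ℂ v _ _ hd, map_smul,
      smul_eq_mul, Units.smul_def, map_zsmul] at this
    rcases mul_eq_zero.mp this with h0 | h0
    · rw [h0, zero_smul]
    · exfalso
      rcases smul_eq_zero.mp h0 with h1 | h1
      · exact Units.ne_zero _ h1
      · exact hL _ h1
  · intro t _ hts
    rw [mul_smul_comm, ExteriorAlgebra.ιMulti_family_mul_of_not_disjoint, smul_zero]
    intro hdis
    apply hts
    have hsub : t.val ⊆ s.val := by
      intro i hi
      by_contra hn
      exact Finset.disjoint_left.mp hdis (Finset.mem_compl.mpr hn) hi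
    apply Subtype.ext
    apply Finset.eq_of_subset_of_card_le hsub
    have h1 : s.val.card = 2 := s.2
    have h2 : t.val.card = 2 := t.2
    omega
  · simp

lemma ι_mul_pow (x : V) (U : Submodule ℂ V) (k : ℕ) (z : ExteriorAlgebra ℂ V)
    (hz : z ∈ extPow V U k) :
    ExteriorAlgebra.ι ℂ x * z = (-1 : ℂ) ^ k • (z * ExteriorAlgebra.ι ℂ x) := by
  unfold extPow at hz
  induction hz using Submodule.pow_induction_on_left' with
  | algebraMap r => simp [Algebra.commutes]
  | add a b i ha hb iha ihb => rw [mul_add, add_mul, iha, ihb, smul_add]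
  | mem_mul m hm i a ha ih =>
    obtain ⟨u, hu, rfl⟩ := hm
    have h := eq_neg_of_add_eq_zero_left (ExteriorAlgebra.ι_add_mul_swap (R := ℂ) x u)
    rw [← mul_assoc, h, neg_mul, mul_assoc, ih, pow_succ]
    simp [mul_assoc]

lemma ext2_comm (U U' : Submodule ℂ V) (k : ℕ) (w z : ExteriorAlgebra ℂ V)
    (hw : w ∈ extPow V U 2) (hz : z ∈ extPow V U' k) : w * z = z * w := by
  unfold extPow at hz
  induction hz using Submodule.pow_induction_on_left' with
  | algebraMap r => simp [Algebra.commutes]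
  | add a b i ha hb iha ihb => rw [mul_add, add_mul, iha, ihb]
  | mem_mul m hm i a ha ih =>
    obtain ⟨u, hu, rfl⟩ := hm
    have h := ι_mul_pow u U 2 w hw
    simp only [even_two, Even.neg_pow, one_pow, one_smul] at h
    rw [← mul_assoc, ← h, mul_assoc, ih, mul_assoc]

lemma top_ne (vol : ⋀[ℂ]^6 V →ₗ[ℂ] ℂ) (hvol : Function.Bijective vol)
    (hdim : finrank ℂ V = 6) (u : Fin 6 → V) (hu : LinearIndependent ℂ u) :
    volC V 6 vol (ExteriorAlgebra.ιMulti ℂ 6 u) ≠ 0 := by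
  intro h0
  have h1 : volC V 6 vol (exteriorPower.ιMulti ℂ 6 u : ⋀[ℂ]^6 V) = 0 := h0
  rw [volC_apply] at h1
  let b := basisOfLinearIndependentOfCardEqFinrank hu (by simp [hdim])
  have hb : (b : Fin 6 → V) = u := coe_basisOfLinearIndependentOfCardEqFinrank _ _
  have h2' : (vol.compAlternatingMap (exteriorPower.ιMulti ℂ 6)) b = 0 := by
    rw [hb]; exact h1
  rw [AlternatingMap.map_basis_eq_zero_iff] at h2'
  obtain ⟨z, hz⟩ := hvol.2 1
  have hz' : z ∈ (⊤ : Submodule ℂ (⋀[ℂ]^6 V)) := trivial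
  rw [← exteriorPower.ιMulti_span ℂ 6 V] at hz'
  have h4 : Submodule.span ℂ (Set.range (exteriorPower.ιMulti ℂ 6 (M := V))) ≤
      LinearMap.ker vol := by
    rw [Submodule.span_le]
    rintro _ ⟨m, rfl⟩
    exact DFunLike.congr_fun h2' m
  have h5 : vol z = 0 := h4 hz'
  rw [h5] at hz
  exact zero_ne_one hz

lemma top_ne' (vol : ⋀[ℂ]^6 V →ₗ[ℂ] ℂ) (hvol : Function.Bijective vol)
    (hdim : finrank ℂ V = 6) (U : Submodule ℂ V) (b : Basis (Fin 5) ℂ U) (x : V) (hx : x ∉ U)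
    (s) : volC V 6 vol (ExteriorAlgebra.ι ℂ x *
      ExteriorAlgebra.ιMulti_family ℂ (3 + 2) (fun i => (b i : V)) s) ≠ 0 := by
  have hv : LinearIndependent ℂ (fun i => (b i : V)) :=
    b.linearIndependent.map' U.subtype (Submodule.ker_subtype U)
  have hv2 := hv.comp (Set.powersetCard.ofFinEmbEquiv.symm s)
    (Set.powersetCard.ofFinEmbEquiv.symm s).injective
  have hu : LinearIndependent ℂ (Fin.cons x
      ((fun i => (b i : V)) ∘ (Set.powersetCard.ofFinEmbEquiv.symm s)) : Fin 6 → V) := by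
    rw [linearIndependent_finCons]
    refine ⟨hv2, fun hmem => hx ?_⟩
    refine (Submodule.span_le.mpr ?_) hmem
    rintro _ ⟨i, rfl⟩
    exact (b _).2
  have := top_ne vol hvol hdim _ hu
  rw [ExteriorAlgebra.ιMulti_succ_apply] at this
  exact this

/-- The pairing `(η, w) ↦ L (η * w)` between two subspaces of the exterior algebra. -/
def pairing (L : ExteriorAlgebra ℂ V →ₗ[ℂ] ℂ) (E F : Submodule ℂ (ExteriorAlgebra ℂ V)) :
    E →ₗ[ℂ] F →ₗ[ℂ] ℂ :=
  LinearMap.mk₂ ℂ (fun a b => L ((a : ExteriorAlgebra ℂ V) * (b : ExteriorAlgebra ℂ V)))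
    (by intros; simp [add_mul]) (by intros; simp) (by intros; simp [mul_add]) (by intros; simp)

lemma pairing_apply (L : ExteriorAlgebra ℂ V →ₗ[ℂ] ℂ)
    (E F : Submodule ℂ (ExteriorAlgebra ℂ V)) (a : E) (b : F) :
    pairing L E F a b = L ((a : ExteriorAlgebra ℂ V) * (b : ExteriorAlgebra ℂ V)) := rfl

lemma bijective_of_flip_injective {E F : Type} [AddCommGroup E] [Module ℂ E]
    [AddCommGroup F] [Module ℂ F] [FiniteDimensional ℂ E] [FiniteDimensional ℂ F]
    (hEF : finrank ℂ E = finrank ℂ F) (P : E →ₗ[ℂ] F →ₗ[ℂ] ℂ)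
    (h : Function.Injective P.flip) : Function.Bijective P := by
  have hs : Function.Surjective P.flip :=
    (LinearMap.injective_iff_surjective_of_finrank_eq_finrank
      (hEF.symm.trans Subspace.dual_finrank_eq.symm)).mp h
  have hi : Function.Injective P := by
    rw [injective_iff_map_eq_zero]
    intro a ha
    rw [← Module.forall_dual_apply_eq_zero_iff ℂ a]
    intro f
    obtain ⟨w, rfl⟩ := hs f
    rw [LinearMap.flip_apply, ha, LinearMap.zero_apply]
  refine ⟨hi, (LinearMap.injective_iff_surjective_of_finrank_eq_finrank ?_).mp hi⟩
  rw [hEF]; exact Subspace.dual_finrank_eq.symm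

end helpers

end EPW

theorem stmt6 (V : Type) [AddCommGroup V] [Module ℂ V]
    (hdim : finrank ℂ V = 6)
    (vol : ⋀[ℂ]^6 V →ₗ[ℂ] ℂ) (hvol : Function.Bijective vol)
    (V₅ : Submodule ℂ V) (hV₅ : finrank ℂ V₅ = 5)
    (x : V) (hx : x ∉ V₅)
    (W : Submodule ℂ (ExteriorAlgebra ℂ V)) (hW : W ≤ EPW.extPow V V₅ 2)
    (q : W →ₗ[ℂ] W →ₗ[ℂ] ℂ) (hq : ∀ a b : W, q a b = q b a) :
    (EPW.AWq V vol x V₅ W q ≤ ⋀[ℂ]^3 V ∧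
      finrank ℂ (EPW.AWq V vol x V₅ W q) = 10 ∧
      (∀ a b : ExteriorAlgebra ℂ V, a ∈ EPW.AWq V vol x V₅ W q →
        b ∈ EPW.AWq V vol x V₅ W q → EPW.volC V 6 vol (a * b) = 0)) ∧
    ((EPW.AWq V vol x V₅ W q ⊓ EPW.extPow V V₅ 3 : Submodule ℂ (ExteriorAlgebra ℂ V)) : Set _)
      = {η | η ∈ EPW.extPow V V₅ 3 ∧
          ∀ w' : W, EPW.volC V 6 vol
            (ExteriorAlgebra.ι ℂ x * η * (w' : ExteriorAlgebra ℂ V)) = 0} ∧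
    finrank ℂ (EPW.AWq V vol x V₅ W q ⊓ EPW.extPow V V₅ 3 : Submodule ℂ (ExteriorAlgebra ℂ V))
      = 10 - finrank ℂ W := by
  have hfV₅ : FiniteDimensional ℂ V₅ := FiniteDimensional.of_finrank_pos (by omega)
  have hf2 := EPW.finite_extPow V₅ 2
  have hf3 := EPW.finite_extPow V₅ 3
  have hd2 : finrank ℂ (EPW.extPow V V₅ 2) = 10 := by
    rw [EPW.finrank_extPow, hV₅]; rfl
  have hd3 : finrank ℂ (EPW.extPow V V₅ 3) = 10 := by
    rw [EPW.finrank_extPow, hV₅]; rfl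
  have hd6 : EPW.extPow V V₅ 6 = ⊥ := by
    have hf6 := EPW.finite_extPow V₅ 6
    rw [← Submodule.finrank_eq_zero (R := ℂ), EPW.finrank_extPow, hV₅]; rfl
  have hfW : FiniteDimensional ℂ W := Submodule.finiteDimensional_of_le hW
  let b : Basis (Fin 5) ℂ V₅ := Module.finBasisOfFinrankEq ℂ V₅ hV₅
  let L : ExteriorAlgebra ℂ V →ₗ[ℂ] ℂ :=
    EPW.volC V 6 vol ∘ₗ LinearMap.mulLeft ℂ (ExteriorAlgebra.ι ℂ x)
  have hLdef : ∀ z, L z = EPW.volC V 6 vol (ExteriorAlgebra.ι ℂ x * z) := fun z => rfl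
  let P := EPW.pairing L (EPW.extPow V V₅ 3) (EPW.extPow V V₅ 2)
  have hflip : Function.Injective P.flip := by
    rw [injective_iff_map_eq_zero]
    intro w hw
    apply Subtype.ext
    apply EPW.nondeg (fun i => (b i : V)) L
      (EPW.top_ne' vol hvol hdim V₅ b x hx) _ ((EPW.extPow_span V₅ b 2) ▸ w.2)
    intro s
    have hs : ExteriorAlgebra.ιMulti_family ℂ 3 (fun i => (b i : V)) s ∈ EPW.extPow V V₅ 3 := by
      rw [EPW.extPow_span V₅ b 3]
      exact Submodule.subset_span ⟨s, rfl⟩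
    exact LinearMap.congr_fun hw ⟨_, hs⟩
  have hP : Function.Bijective P := EPW.bijective_of_flip_injective (hd3.trans hd2.symm) P hflip
  -- restriction of the pairing to `W`
  let i : W →ₗ[ℂ] EPW.extPow V V₅ 2 := Submodule.inclusion hW
  let R : EPW.extPow V V₅ 3 →ₗ[ℂ] Module.Dual ℂ W := i.dualMap ∘ₗ P
  have hRapp : ∀ η w', R η w' = EPW.volC V 6 vol
      (ExteriorAlgebra.ι ℂ x * (η : ExteriorAlgebra ℂ V) * (w' : ExteriorAlgebra ℂ V)) := by
    intro η w'
    rw [mul_assoc]; rfl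
  have hR : Function.Surjective R :=
    (LinearMap.dualMap_surjective_of_injective (Submodule.inclusion_injective hW)).comp hP.2
  have hxx : ExteriorAlgebra.ι ℂ x * ExteriorAlgebra.ι ℂ x = 0 := ExteriorAlgebra.ι_sq_zero x
  -- uniqueness of the decomposition
  have huniq : ∀ η ∈ EPW.extPow V V₅ 3, ∀ w ∈ EPW.extPow V V₅ 2,
      η + ExteriorAlgebra.ι ℂ x * w = 0 → η = 0 ∧ w = 0 := by
    intro η hη w hw h
    have h1 : ExteriorAlgebra.ι ℂ x * η = 0 := by
      have := congrArg (fun z => ExteriorAlgebra.ι ℂ x * z) h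
      simpa [mul_add, ← mul_assoc, hxx] using this
    have h2 : η = 0 := by
      have : (⟨η, hη⟩ : EPW.extPow V V₅ 3) = 0 := by
        apply hP.1
        rw [map_zero]
        ext w'
        change EPW.volC V 6 vol (ExteriorAlgebra.ι ℂ x * (η * (w' : ExteriorAlgebra ℂ V))) = 0
        rw [← mul_assoc, h1, zero_mul, map_zero]
      exact congrArg Subtype.val this
    refine ⟨h2, ?_⟩
    rw [h2, zero_add] at h
    have : (⟨w, hw⟩ : EPW.extPow V V₅ 2) = 0 := by
      apply hflip
      rw [map_zero]
      ext η'
      change EPW.volC V 6 vol (ExteriorAlgebra.ι ℂ x * ((η' : ExteriorAlgebra ℂ V) * w)) = 0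
      rw [← EPW.ext2_comm V₅ V₅ 3 w η' hw η'.2, ← mul_assoc, h, zero_mul, map_zero]
    exact congrArg Subtype.val this
  -- membership of the intersection
  have hmem : ∀ η, η ∈ EPW.AWq V vol x V₅ W q ⊓ EPW.extPow V V₅ 3 ↔
      η ∈ EPW.extPow V V₅ 3 ∧ ∀ w' : W, EPW.volC V 6 vol
            (ExteriorAlgebra.ι ℂ x * η * (w' : ExteriorAlgebra ℂ V)) = 0 := by
    intro η
    constructor
    · rintro ⟨⟨w, η', hη', he, hc⟩, hη⟩
      refine ⟨hη, ?_⟩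
      have h0 := huniq (η' - η) (sub_mem hη' hη) w (hW w.2) (by rw [he]; abel)
      have hw : w = 0 := Subtype.ext h0.2
      have hη : η' = η := sub_eq_zero.mp h0.1
      subst hη
      intro w'
      rw [hc w', hw]; simp
    · rintro ⟨hη, h⟩
      exact ⟨⟨0, η, hη, by simp, fun w' => by rw [h w']; simp⟩, hη⟩
  refine ⟨⟨?_, ?_, ?_⟩, ?_, ?_⟩
  · rintro _ ⟨w, η, hη, rfl, -⟩
    refine add_mem (EPW.extPow_le _ _ hη) ?_
    have hw : (w : ExteriorAlgebra ℂ V) ∈ ⋀[ℂ]^2 V := EPW.extPow_le _ _ (hW w.2)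
    have hx1 : ExteriorAlgebra.ι ℂ x ∈ LinearMap.range (ExteriorAlgebra.ι ℂ (M := V)) :=
      ⟨x, rfl⟩
    unfold exteriorPower at hw ⊢
    rw [pow_succ' _ 2]
    exact Submodule.mul_mem_mul hx1 hw
  · let φ : (W × EPW.extPow V V₅ 3) →ₗ[ℂ] Module.Dual ℂ W := LinearMap.coprod q R
    have hφ : Function.Surjective φ := by
      intro f
      obtain ⟨η, rfl⟩ := hR f
      exact ⟨(0, η), by simp [φ]⟩
    let ψ : (W × EPW.extPow V V₅ 3) →ₗ[ℂ] ExteriorAlgebra ℂ V :=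
      LinearMap.coprod (LinearMap.mulLeft ℂ (ExteriorAlgebra.ι ℂ x) ∘ₗ W.subtype)
        (EPW.extPow V V₅ 3).subtype
    have hψ : Function.Injective ψ := by
      rw [injective_iff_map_eq_zero]
      rintro ⟨w, η⟩ h
      have h0 := huniq η η.2 w (hW w.2) (by rw [add_comm]; simpa [ψ] using h)
      exact Prod.ext (Subtype.ext h0.2) (Subtype.ext h0.1)
    have hA : EPW.AWq V vol x V₅ W q = Submodule.map ψ (LinearMap.ker φ) := by
      ext z
      constructor
      · rintro ⟨w, η, hη, rfl, hc⟩
        refine ⟨(w, ⟨η, hη⟩), ?_, ?_⟩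
        · rw [SetLike.mem_coe, LinearMap.mem_ker]
          ext w'
          simp only [φ, LinearMap.coprod_apply, LinearMap.add_apply, LinearMap.zero_apply]
          rw [hRapp, hc w']; ring
        · simp [ψ, add_comm]
      · rintro ⟨⟨w, η⟩, hk, rfl⟩
        refine ⟨w, η, η.2, by simp [ψ, add_comm], ?_⟩
        intro w'
        have := LinearMap.congr_fun (LinearMap.mem_ker.mp hk) w'
        simp only [φ, LinearMap.coprod_apply, LinearMap.add_apply, LinearMap.zero_apply] at this
        rw [hRapp] at this
        linear_combination this
    rw [hA, ← (Submodule.equivMapOfInjective ψ hψ _).finrank_eq]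
    have h1 := LinearMap.finrank_range_add_finrank_ker φ
    rw [LinearMap.range_eq_top.mpr hφ, finrank_top, Module.finrank_prod, hd3,
      Subspace.dual_finrank_eq] at h1
    omega
  · rintro _ _ ⟨w, η, hη, rfl, hc⟩ ⟨w', η', hη', rfl, hc'⟩
    have e1 : η * η' = 0 := by
      have : η * η' ∈ EPW.extPow V V₅ 6 := by
        unfold EPW.extPow at hη hη' ⊢
        rw [pow_add _ 3 3]
        exact Submodule.mul_mem_mul hη hη'
      rw [hd6] at this
      exact (Submodule.mem_bot ℂ).mp this
    have e2 : η * (ExteriorAlgebra.ι ℂ x * (w' : ExteriorAlgebra ℂ V)) =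
        - (ExteriorAlgebra.ι ℂ x * η * (w' : ExteriorAlgebra ℂ V)) := by
      have h := EPW.ι_mul_pow x V₅ 3 η hη
      rw [h, ← mul_assoc]
      norm_num
    have e3 : ExteriorAlgebra.ι ℂ x * (w : ExteriorAlgebra ℂ V) * η' =
        ExteriorAlgebra.ι ℂ x * η' * (w : ExteriorAlgebra ℂ V) := by
      rw [mul_assoc, EPW.ext2_comm V₅ V₅ 3 w η' (hW w.2) hη', mul_assoc]
    have e4 : ExteriorAlgebra.ι ℂ x * (w : ExteriorAlgebra ℂ V) *
        (ExteriorAlgebra.ι ℂ x * (w' : ExteriorAlgebra ℂ V)) = 0 := by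
      have h := EPW.ι_mul_pow x V₅ 2 w (hW w.2)
      simp only [even_two, Even.neg_pow, one_pow, one_smul] at h
      rw [h, mul_assoc, ← mul_assoc _ _ (w' : ExteriorAlgebra ℂ V), hxx, zero_mul, mul_zero]
    rw [add_mul, mul_add, mul_add, e1, e2, e3, e4, zero_add, add_zero, map_add, map_neg,
      hc w', hc' w, hq w w']
    ring
  · ext η
    exact hmem η
  · have hB : EPW.AWq V vol x V₅ W q ⊓ EPW.extPow V V₅ 3 =
        Submodule.map (EPW.extPow V V₅ 3).subtype (LinearMap.ker R) := by
      ext η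
      rw [hmem]
      constructor
      · rintro ⟨hη, h⟩
        refine ⟨⟨η, hη⟩, ?_, rfl⟩
        rw [SetLike.mem_coe, LinearMap.mem_ker]
        ext w'
        rw [hRapp]; exact h w'
      · rintro ⟨η, hk, rfl⟩
        refine ⟨η.2, fun w' => ?_⟩
        have := LinearMap.congr_fun (LinearMap.mem_ker.mp hk) w'
        rw [hRapp] at this
        exact this
    rw [hB, Submodule.finrank_map_subtype_eq]
    have h1 := LinearMap.finrank_range_add_finrank_ker R
    rw [LinearMap.range_eq_top.mpr hR, finrank_top, hd3, Subspace.dual_finrank_eq] at h1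
    omega
end
end

section
/- Suppose dim W = 7 and that dim(W ∩ (v∧V₅)) ≤ 2 for every nonzero v ∈ V₅. Then for every nonzero v ∈ V₅, one has dim(A(W,q) ∩ F_v) ≥ 3 if and only if dim(W ∩ (v∧V₅)) = 2 and q(a,b) = 0 for all a, b ∈ W ∩ (v∧V₅); moreover, when these equivalent conditions hold, dim(A(W,q) ∩ F_v) = 3. -/
open ExteriorAlgebra Module

noncomputable section

namespace EPW

variable (V : Type) [AddCommGroup V] [Module ℂ V]

/-- `v ∧ W = {v ∧ u : u ∈ W}` for a subspace `W ⊆ V`. -/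
def vWedge (v : V) (W : Submodule ℂ V) : Submodule ℂ (ExteriorAlgebra ℂ V) :=
  Submodule.map (LinearMap.mulLeft ℂ (ExteriorAlgebra.ι ℂ v))
    (Submodule.map (ExteriorAlgebra.ι ℂ) W)

end EPW


theorem absLA {E2 E3 T : Type*} [AddCommGroup E2] [Module ℂ E2] [AddCommGroup E3] [Module ℂ E3]
    [AddCommGroup T] [Module ℂ T] [FiniteDimensional ℂ E2]
    (e : E3 ≃ₗ[ℂ] Dual ℂ E2) (i : T →ₗ[ℂ] E2) (hi : Function.Injective i)
    (U : Submodule ℂ E2) (q : T →ₗ[ℂ] T →ₗ[ℂ] ℂ) (hq : ∀ a b, q a b = q b a)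
    (h10 : finrank ℂ E2 = 10) (h7 : finrank ℂ T = 7) (h4 : finrank ℂ U = 4)
    (hk : finrank ℂ (U.comap i) ≤ 2)
    (S : Submodule ℂ (E3 × T))
    (hS : ∀ p : E3 × T, p ∈ S ↔ i p.2 ∈ U ∧ (∀ u ∈ U, e p.1 u = 0) ∧
      ∀ t, e p.1 (i t) = - q p.2 t) :
    (3 ≤ finrank ℂ S ↔ (finrank ℂ (U.comap i) = 2 ∧ ∀ a b, i a ∈ U → i b ∈ U → q a b = 0)) ∧
    ((finrank ℂ (U.comap i) = 2 ∧ ∀ a b, i a ∈ U → i b ∈ U → q a b = 0) → finrank ℂ S = 3) := by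
  have : FiniteDimensional ℂ E3 := e.symm.finiteDimensional
  have : FiniteDimensional ℂ T := FiniteDimensional.of_injective i hi
  set K := U.comap i with hK
  -- the radical
  let R : Submodule ℂ T := K ⊓ ⨅ b : K, LinearMap.ker (q b)
  have hR : ∀ a, a ∈ R ↔ a ∈ K ∧ ∀ b ∈ K, q a b = 0 := by
    intro a
    simp only [R, Submodule.mem_inf, Submodule.mem_iInf, LinearMap.mem_ker, Subtype.forall]
    refine and_congr_right fun _ => forall₂_congr fun b _ => ?_
    rw [hq]
  let P : Submodule ℂ E2 := U ⊔ LinearMap.range i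
  let f : S →ₗ[ℂ] T := LinearMap.snd ℂ E3 T ∘ₗ S.subtype
  have hrange : LinearMap.range f = R := by
    ext a
    rw [hR]
    constructor
    · rintro ⟨⟨p, hp⟩, rfl⟩
      obtain ⟨h1, h2, h3⟩ := (hS p).1 hp
      refine ⟨h1, fun b hb => ?_⟩
      have := h3 b
      rw [h2 _ hb] at this
      change q p.2 b = 0
      linear_combination this
    · rintro ⟨h1, h2⟩
      let g : (U × T) →ₗ[ℂ] E2 := U.subtype.coprod i
      let l : Dual ℂ (U × T) := - (q a ∘ₗ LinearMap.snd ℂ U T)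
      have hl : l ∈ LinearMap.range g.dualMap := by
        rw [LinearMap.range_dualMap_eq_dualAnnihilator_ker, Submodule.mem_dualAnnihilator]
        rintro ⟨u, t⟩ hut
        have h : (u : E2) + i t = 0 := by simpa [g] using hut
        have ht : t ∈ K := by
          rw [hK, Submodule.mem_comap, eq_neg_of_add_eq_zero_right h]
          exact neg_mem u.2
        simp [l, h2 t ht]
      obtain ⟨m, hm⟩ := hl
      refine ⟨⟨(e.symm m, a), (hS _).2 ⟨h1, ?_, ?_⟩⟩, rfl⟩
      · intro u hu
        have := LinearMap.congr_fun hm (⟨u, hu⟩, 0)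
        simpa [g, l] using this
      · intro t
        have := LinearMap.congr_fun hm (0, t)
        simpa [g, l] using this
  have hker : finrank ℂ (LinearMap.ker f) = finrank ℂ P.dualAnnihilator := by
    have hmem : ∀ m : P.dualAnnihilator, (e.symm (m : Dual ℂ E2), (0 : T)) ∈ S := by
      rintro ⟨m, hm⟩
      rw [Submodule.mem_dualAnnihilator] at hm
      refine (hS _).2 ⟨by simp, ?_, ?_⟩
      · intro u hu
        simpa using hm u (Submodule.mem_sup_left hu)
      · intro t
        simpa using hm (i t) (Submodule.mem_sup_right ⟨t, rfl⟩)
    symm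
    refine LinearEquiv.finrank_eq (LinearEquiv.ofBijective
      (LinearMap.codRestrict (LinearMap.ker f) (LinearMap.codRestrict S
        (LinearMap.inl ℂ E3 T ∘ₗ e.symm.toLinearMap ∘ₗ P.dualAnnihilator.subtype) hmem)
        (fun m => rfl)) ⟨?_, ?_⟩)
    · intro a b hab
      have := congrArg (fun z => (z : E3 × T).1) (congrArg Subtype.val (congrArg Subtype.val hab))
      exact Subtype.ext (e.symm.injective this)
    · rintro ⟨⟨⟨η, t⟩, hp⟩, hz⟩
      have ht : t = 0 := by simpa [f] using hz
      subst ht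
      obtain ⟨-, h2, h3⟩ := (hS _).1 hp
      refine ⟨⟨e η, ?_⟩, ?_⟩
      · rw [Submodule.mem_dualAnnihilator]
        intro y hy
        obtain ⟨u, hu, _, ⟨t, rfl⟩, rfl⟩ := Submodule.mem_sup.1 hy
        rw [map_add]
        simp at h3 h2
        rw [h2 u hu, h3 t, add_zero]
      · apply Subtype.ext; apply Subtype.ext
        exact Prod.ext (e.symm_apply_apply η) rfl
  have hP1 : finrank ℂ P + finrank ℂ P.dualAnnihilator = 10 := by
    rw [← h10]; exact Subspace.finrank_add_finrank_dualAnnihilator_eq P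
  have hP2 : finrank ℂ P + finrank ℂ (U ⊓ LinearMap.range i : Submodule ℂ E2) = 4 + 7 := by
    rw [Submodule.finrank_sup_add_finrank_inf_eq, h4, LinearMap.finrank_range_of_inj hi, h7]
  have hP3 : finrank ℂ (U ⊓ LinearMap.range i : Submodule ℂ E2) = finrank ℂ K := by
    rw [inf_comm, ← Submodule.map_comap_eq]
    exact (LinearEquiv.finrank_eq (Submodule.equivMapOfInjective i hi K)).symm
  have hrn := LinearMap.finrank_range_add_finrank_ker f
  rw [hrange, hker] at hrn
  have hRK : R ≤ K := inf_le_left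
  have hle := Submodule.finrank_mono hRK
  have key : (∀ a b, i a ∈ U → i b ∈ U → q a b = 0) ↔ finrank ℂ R = finrank ℂ K := by
    constructor
    · intro h
      have : R = K := le_antisymm hRK fun a ha => (hR a).2 ⟨ha, fun b hb => h a b ha hb⟩
      rw [this]
    · intro h a b ha hb
      have : R = K := Submodule.eq_of_le_of_finrank_eq hRK h
      have ha' : a ∈ R := this ▸ ha
      exact ((hR a).1 ha').2 b hb
  rw [key]
  omega

namespace EPWaux

variable {V : Type} [AddCommGroup V] [Module ℂ V]

/-- contraction -/
def c (d : Dual ℂ V) : ExteriorAlgebra ℂ V →ₗ[ℂ] ExteriorAlgebra ℂ V :=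
  CliffordAlgebra.contractLeft (Q := (0 : QuadraticForm ℂ V)) d

lemma c_mul (d : Dual ℂ V) (a : V) (b : ExteriorAlgebra ℂ V) :
    c d (ι ℂ a * b) = d a • b - ι ℂ a * c d b :=
  CliffordAlgebra.contractLeft_ι_mul (Q := (0 : QuadraticForm ℂ V)) (d := d) a b

lemma c_alg (d : Dual ℂ V) (r : ℂ) : c d (algebraMap ℂ _ r) = 0 :=
  CliffordAlgebra.contractLeft_algebraMap (Q := (0 : QuadraticForm ℂ V)) (d := d) r

lemma c_ι (d : Dual ℂ V) (a : V) : c d (ι ℂ a) = algebraMap ℂ _ (d a) :=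
  CliffordAlgebra.contractLeft_ι (Q := (0 : QuadraticForm ℂ V)) (d := d) a

lemma c_c (d : Dual ℂ V) (z : ExteriorAlgebra ℂ V) : c d (c d z) = 0 :=
  CliffordAlgebra.contractLeft_contractLeft (Q := (0 : QuadraticForm ℂ V)) (d := d) z

lemma ext_succ (W : Submodule ℂ V) (k : ℕ) :
    EPW.extPow V W (k + 1) = Submodule.map (ι ℂ) W * EPW.extPow V W k := by
  unfold EPW.extPow; rw [pow_succ']

lemma ext_zero (W : Submodule ℂ V) {z : ExteriorAlgebra ℂ V} :
    z ∈ EPW.extPow V W 0 ↔ ∃ r, algebraMap ℂ _ r = z := by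
  unfold EPW.extPow; rw [pow_zero, Submodule.mem_one]

lemma mul_mem (W : Submodule ℂ V) (k : ℕ) {u : V} (hu : u ∈ W) {z : ExteriorAlgebra ℂ V}
    (hz : z ∈ EPW.extPow V W k) : ι ℂ u * z ∈ EPW.extPow V W (k + 1) := by
  rw [ext_succ]; exact Submodule.mul_mem_mul ⟨u, hu, rfl⟩ hz

/-- induction principle -/
lemma ext_ind (W : Submodule ℂ V) (k : ℕ) (P : Submodule ℂ (ExteriorAlgebra ℂ V))
    (h : ∀ u ∈ W, ∀ z ∈ EPW.extPow V W k, ι ℂ u * z ∈ P) : EPW.extPow V W (k + 1) ≤ P := by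
  rw [ext_succ, Submodule.mul_le]
  rintro _ ⟨u, hu, rfl⟩ z hz
  exact h u hu z hz

lemma c_mem (d : Dual ℂ V) (W : Submodule ℂ V) (k : ℕ) :
    ∀ z ∈ EPW.extPow V W (k + 1), c d z ∈ EPW.extPow V W k := by
  induction k with
  | zero =>
    change EPW.extPow V W (0 + 1) ≤ (EPW.extPow V W 0).comap (c d)
    refine ext_ind W 0 _ fun u hu z hz => ?_
    obtain ⟨r, rfl⟩ := (ext_zero W).1 hz
    rw [Submodule.mem_comap, c_mul, c_alg, mul_zero, sub_zero]
    exact Submodule.smul_mem _ _ hz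
  | succ k ih =>
    change EPW.extPow V W (k + 1 + 1) ≤ (EPW.extPow V W (k + 1)).comap (c d)
    refine ext_ind W (k + 1) _ fun u hu z hz => ?_
    rw [Submodule.mem_comap, c_mul]
    exact sub_mem (Submodule.smul_mem _ _ hz) (mul_mem W k hu (ih z hz))

lemma c_kill (d : Dual ℂ V) (W : Submodule ℂ V) (hd : ∀ u ∈ W, d u = 0) (k : ℕ) :
    ∀ z ∈ EPW.extPow V W k, c d z = 0 := by
  induction k with
  | zero =>
    intro z hz
    obtain ⟨r, rfl⟩ := (ext_zero W).1 hz
    exact c_alg d r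
  | succ k ih =>
    change EPW.extPow V W (k + 1) ≤ LinearMap.ker (c d)
    refine ext_ind W k _ fun u hu z hz => ?_
    rw [LinearMap.mem_ker, c_mul, hd u hu, ih z hz]; simp

lemma swap (a b : V) : ι ℂ a * ι ℂ b = - (ι ℂ b * ι ℂ a) :=
  eq_neg_of_add_eq_zero_left (ExteriorAlgebra.ι_add_mul_swap a b)

lemma comm (u : V) (W : Submodule ℂ V) (k : ℕ) :
    ∀ z ∈ EPW.extPow V W k, z * ι ℂ u = (-1 : ℂ) ^ k • (ι ℂ u * z) := by
  induction k with
  | zero =>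
    intro z hz
    obtain ⟨r, rfl⟩ := (ext_zero W).1 hz
    rw [pow_zero, one_smul, Algebra.commutes]
  | succ k ih =>
    let P : Submodule ℂ (ExteriorAlgebra ℂ V) := LinearMap.eqLocus
      (LinearMap.mulRight ℂ (ι ℂ u)) ((-1 : ℂ) ^ (k + 1) • LinearMap.mulLeft ℂ (ι ℂ u))
    change EPW.extPow V W (k + 1) ≤ P
    refine ext_ind W k _ fun a ha z hz => ?_
    change ι ℂ a * z * ι ℂ u = (-1 : ℂ) ^ (k + 1) • (ι ℂ u * (ι ℂ a * z))
    rw [mul_assoc, ih z hz, ← mul_assoc, swap u a, mul_smul_comm, pow_succ]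
    simp [mul_assoc]

lemma comm_zero (u : V) (W : Submodule ℂ V) (k : ℕ) {z : ExteriorAlgebra ℂ V}
    (hz : z ∈ EPW.extPow V W k) : z * ι ℂ u = 0 ↔ ι ℂ u * z = 0 := by
  rw [comm u W k z hz, smul_eq_zero]
  simp

lemma ext_mono (W : Submodule ℂ V) (k : ℕ) : EPW.extPow V W k ≤ EPW.extPow V ⊤ k :=
  pow_le_pow_left' (Submodule.map_mono le_top) k

lemma ext_top (k : ℕ) : EPW.extPow V ⊤ k = ⋀[ℂ]^k V := by
  unfold EPW.extPow; rw [Submodule.map_top]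

lemma mul_mem_right (k : ℕ) (u : V) {z : ExteriorAlgebra ℂ V}
    (hz : z ∈ EPW.extPow V ⊤ k) : z * ι ℂ u ∈ EPW.extPow V ⊤ (k + 1) := by
  rw [comm u ⊤ k z hz]
  exact Submodule.smul_mem _ _ (mul_mem ⊤ k trivial hz)

lemma exists_phi (v : V) (hv : v ≠ 0) : ∃ φ : Dual ℂ V, φ v = 1 := by
  obtain ⟨f, hf, -⟩ := Submodule.exists_dual_map_eq_bot_of_notMem (p := (⊥ : Submodule ℂ V))
    (x := v) (by simpa using hv) inferInstance
  exact ⟨(f v)⁻¹ • f, by simp [hf]⟩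

lemma nondeg [FiniteDimensional ℂ V] (k : ℕ) : ∀ (U : Submodule ℂ V), k < finrank ℂ U →
    ∀ z ∈ EPW.extPow V ⊤ k, (∀ u ∈ U, ι ℂ u * z = 0) → z = 0 := by
  have hex : ∀ U : Submodule ℂ V, 0 < finrank ℂ U → ∃ u ∈ U, u ≠ 0 := by
    intro U hU
    refine U.exists_mem_ne_zero_of_ne_bot ?_
    rintro rfl
    simp at hU
  induction k with
  | zero =>
    intro U hU z hz h
    obtain ⟨r, rfl⟩ := (ext_zero _).1 hz
    obtain ⟨u, hu, hu0⟩ := hex U hU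
    obtain ⟨φ, hφ⟩ := exists_phi u hu0
    have := congrArg (c φ) (h u hu)
    rw [c_mul, c_alg, hφ] at this
    simpa using this
  | succ k ih =>
    intro U hU z hz h
    obtain ⟨u, hu, hu0⟩ := hex U (by omega)
    obtain ⟨φ, hφ⟩ := exists_phi u hu0
    have hcz : c φ z = 0 := by
      refine ih (U ⊓ LinearMap.ker φ) ?_ _ (c_mem φ ⊤ k z hz) ?_
      · have h1 := Submodule.finrank_sup_add_finrank_inf_eq U (LinearMap.ker φ)
        have h2 := LinearMap.finrank_range_add_finrank_ker φ
        have h3 : finrank ℂ (LinearMap.range φ) ≤ 1 := by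
          simpa using Submodule.finrank_le (LinearMap.range φ)
        have h4 := Submodule.finrank_le (U ⊔ LinearMap.ker φ)
        omega
      · rintro a ⟨ha, ha'⟩
        have := congrArg (c φ) (h a ha)
        rw [c_mul, LinearMap.mem_ker.1 ha'] at this
        simpa using this
    have := congrArg (c φ) (h u hu)
    rw [c_mul, hφ, hcz] at this
    simpa using this

lemma finrank_ext (W : Submodule ℂ V) [FiniteDimensional ℂ W] (k : ℕ) :
    finrank ℂ (EPW.extPow V W k) = (finrank ℂ W).choose k := by
  have h : EPW.extPow V W k =
      (⋀[ℂ]^k W).map (ExteriorAlgebra.map W.subtype).toLinearMap := by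
    unfold EPW.extPow
    rw [Submodule.map_pow]
    congr 1
    ext z
    constructor
    · rintro ⟨u, hu, rfl⟩
      exact ⟨ι ℂ (⟨u, hu⟩ : W), ⟨_, rfl⟩, by simp⟩
    · rintro ⟨_, ⟨u, rfl⟩, rfl⟩
      exact ⟨u, u.2, by simp⟩
  have hinj : Function.Injective (ExteriorAlgebra.map W.subtype).toLinearMap :=
    ExteriorAlgebra.map_injective_field (by simp)
  rw [h, ← (Submodule.equivMapOfInjective _ hinj (⋀[ℂ]^k W)).finrank_eq,
    exteriorPower.finrank_eq]

lemma volC_zero (k : ℕ) (vol : ⋀[ℂ]^k V →ₗ[ℂ] ℂ) (hvol : Function.Injective vol)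
    {z : ExteriorAlgebra ℂ V} (hz : z ∈ EPW.extPow V ⊤ k) (h : EPW.volC V k vol z = 0) : z = 0 := by
  rw [ext_top] at hz
  have h1 : EPW.volC V k vol z = vol ⟨z, hz⟩ := by
    unfold EPW.volC
    simp only [LinearMap.comp_apply]
    congr 1
    apply Subtype.ext
    exact DirectSum.decompose_of_mem_same (fun i : ℕ => ⋀[ℂ]^i V) hz
  rw [h1] at h
  have := hvol (h.trans (map_zero vol).symm)
  exact congrArg Subtype.val this

lemma exists_xi [FiniteDimensional ℂ V] (hdim : finrank ℂ V = 6) (V₅ : Submodule ℂ V)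
    (hV₅ : finrank ℂ V₅ = 5) (x : V) (hx : x ∉ V₅) :
    ∃ ξ : Dual ℂ V, ξ x = 1 ∧ ∀ y, y ∈ V₅ ↔ ξ y = 0 := by
  obtain ⟨f, hf, hf'⟩ := Submodule.exists_dual_map_eq_bot_of_notMem hx inferInstance
  have hle : V₅ ≤ LinearMap.ker f := by
    rwa [LinearMap.le_ker_iff_map]
  have heq : V₅ = LinearMap.ker f := by
    refine Submodule.eq_of_le_of_finrank_le hle ?_
    have h2 := LinearMap.finrank_range_add_finrank_ker f
    have h3 : 0 < finrank ℂ (LinearMap.range f) := by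
      rw [Module.finrank_pos_iff_exists_ne_zero]
      exact ⟨⟨f x, x, rfl⟩, fun h => hf (congrArg Subtype.val h)⟩
    omega
  refine ⟨(f x)⁻¹ • f, by simp [hf], fun y => ?_⟩
  rw [heq]
  simp [hf]

lemma finrank_vWedge (v : V) (hv : v ≠ 0) (V₅ : Submodule ℂ V) [FiniteDimensional ℂ V₅]
    (hv5 : v ∈ V₅) : finrank ℂ (EPW.vWedge V v V₅) + 1 = finrank ℂ V₅ := by
  let g : V₅ →ₗ[ℂ] ExteriorAlgebra ℂ V :=
    LinearMap.mulLeft ℂ (ι ℂ v) ∘ₗ ι ℂ ∘ₗ V₅.subtype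
  have h1 : EPW.vWedge V v V₅ = LinearMap.range g := by
    unfold EPW.vWedge
    simp only [g, LinearMap.range_comp, Submodule.range_subtype]
  have h2 : LinearMap.ker g = Submodule.span ℂ {(⟨v, hv5⟩ : V₅)} := by
    ext ⟨u, hu⟩
    rw [LinearMap.mem_ker, Submodule.mem_span_singleton]
    change ι ℂ v * ι ℂ u = 0 ↔ _
    constructor
    · intro h
      obtain ⟨φ, hφ⟩ := exists_phi v hv
      have := congrArg (c φ) h
      rw [c_mul, c_ι, hφ, one_smul, map_zero, sub_eq_zero, ← Algebra.commutes,
        ← Algebra.smul_def, ← map_smul] at this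
      exact ⟨φ u, Subtype.ext ((ExteriorAlgebra.ι_inj ℂ _ _).1 this).symm⟩
    · rintro ⟨r, hr⟩
      have : r • v = u := congrArg Subtype.val hr
      rw [← this, map_smul, mul_smul_comm, ExteriorAlgebra.ι_sq_zero, smul_zero]
  have h3 := LinearMap.finrank_range_add_finrank_ker g
  rw [h2, finrank_span_singleton (by simpa using hv), ← h1] at h3
  exact h3

end EPWaux

theorem stmt9 (V : Type) [AddCommGroup V] [Module ℂ V]
    (hdim : finrank ℂ V = 6)
    (vol : ⋀[ℂ]^6 V →ₗ[ℂ] ℂ) (hvol : Function.Bijective vol)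
    (V₅ : Submodule ℂ V) (hV₅ : finrank ℂ V₅ = 5)
    (x : V) (hx : x ∉ V₅)
    (W : Submodule ℂ (ExteriorAlgebra ℂ V)) (hW : W ≤ EPW.extPow V V₅ 2)
    (q : W →ₗ[ℂ] W →ₗ[ℂ] ℂ) (hq : ∀ a b : W, q a b = q b a)
    (hW7 : finrank ℂ W = 7)
    (hWv : ∀ v ∈ V₅, v ≠ 0 →
      finrank ℂ (W ⊓ EPW.vWedge V v V₅ : Submodule ℂ (ExteriorAlgebra ℂ V)) ≤ 2) :
    ∀ v ∈ V₅, v ≠ 0 →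
      ((3 ≤ finrank ℂ (EPW.AWq V vol x V₅ W q ⊓ EPW.Fv V v : Submodule ℂ (ExteriorAlgebra ℂ V))
        ↔ (finrank ℂ (W ⊓ EPW.vWedge V v V₅ : Submodule ℂ (ExteriorAlgebra ℂ V)) = 2 ∧
           ∀ a b : W, (a : ExteriorAlgebra ℂ V) ∈ EPW.vWedge V v V₅ →
             (b : ExteriorAlgebra ℂ V) ∈ EPW.vWedge V v V₅ → q a b = 0)) ∧
      ((finrank ℂ (W ⊓ EPW.vWedge V v V₅ : Submodule ℂ (ExteriorAlgebra ℂ V)) = 2 ∧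
           ∀ a b : W, (a : ExteriorAlgebra ℂ V) ∈ EPW.vWedge V v V₅ →
             (b : ExteriorAlgebra ℂ V) ∈ EPW.vWedge V v V₅ → q a b = 0) →
        finrank ℂ (EPW.AWq V vol x V₅ W q ⊓ EPW.Fv V v : Submodule ℂ (ExteriorAlgebra ℂ V))
          = 3)) := by
  have : FiniteDimensional ℂ V := FiniteDimensional.of_finrank_pos (by omega)
  intro v hv hv0
  obtain ⟨ξ, hξx, hξ⟩ := EPWaux.exists_xi hdim V₅ hV₅ x hx
  obtain ⟨φ, hφ⟩ := EPWaux.exists_phi v hv0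
  have hξ0 : ∀ u ∈ V₅, ξ u = 0 := fun u hu => (hξ u).1 hu
  have f2 : finrank ℂ (EPW.extPow V V₅ 2) = 10 := by
    rw [EPWaux.finrank_ext, hV₅]; rfl
  have f3 : finrank ℂ (EPW.extPow V V₅ 3) = 10 := by
    rw [EPWaux.finrank_ext, hV₅]; rfl
  have : FiniteDimensional ℂ (EPW.extPow V V₅ 2) := FiniteDimensional.of_finrank_pos (by omega)
  have : FiniteDimensional ℂ (EPW.extPow V V₅ 3) := FiniteDimensional.of_finrank_pos (by omega)
  -- multiplication by `x` is injective on the exterior powers of `V₅`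
  have hxinj : ∀ z, EPWaux.c ξ z = 0 → ι ℂ x * z = 0 → z = 0 := by
    intro z hz h
    have := congrArg (EPWaux.c ξ) h
    rw [EPWaux.c_mul, hξx, hz] at this
    simpa using this
  -- nondegeneracy
  have hnd : ∀ k < 6, ∀ z ∈ EPW.extPow V ⊤ k, ι ℂ x * z = 0 →
      (∀ u ∈ V₅, z * ι ℂ u = 0) → z = 0 := by
    intro k hk z hz h1 h2
    refine EPWaux.nondeg k ⊤ (by rw [finrank_top]; omega) z hz fun u _ => ?_
    have hu : u - ξ u • x ∈ V₅ := by rw [hξ]; simp [hξx]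
    have h3 := (EPWaux.comm_zero _ ⊤ k hz).1 (h2 _ hu)
    rw [map_sub, map_smul, sub_mul, smul_mul_assoc, h1] at h3
    simpa using h3
  have hxx : ∀ z : ExteriorAlgebra ℂ V, ι ℂ x * (ι ℂ x * z) = 0 := by
    intro z
    rw [← mul_assoc, ExteriorAlgebra.ι_sq_zero, zero_mul]
  have hvv : ∀ z : ExteriorAlgebra ℂ V, ι ℂ v * (ι ℂ v * z) = 0 := by
    intro z
    rw [← mul_assoc, ExteriorAlgebra.ι_sq_zero, zero_mul]
  -- degree of `x ∧ η`
  have hdeg : ∀ η ∈ EPW.extPow V V₅ 3, ι ℂ x * η ∈ EPW.extPow V ⊤ 4 := fun η hη =>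
    EPWaux.mul_mem ⊤ 3 trivial (EPWaux.ext_mono V₅ 3 hη)
  let e0 : EPW.extPow V V₅ 3 →ₗ[ℂ] Dual ℂ (EPW.extPow V V₅ 2) :=
    LinearMap.mk₂ ℂ (fun η w => EPW.volC V 6 vol (ι ℂ x * (η : ExteriorAlgebra ℂ V) * w))
      (by intro a b w; simp only [Submodule.coe_add, mul_add, add_mul, map_add])
      (by intro r a w; simp only [Submodule.coe_smul, mul_smul_comm, smul_mul_assoc, map_smul])
      (by intro a b w; simp only [Submodule.coe_add, mul_add, map_add])
      (by intro r a w; simp only [Submodule.coe_smul, mul_smul_comm, map_smul])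
  have he0 : ∀ η w, e0 η w = EPW.volC V 6 vol (ι ℂ x * (η : ExteriorAlgebra ℂ V) * w) :=
    fun _ _ => rfl
  have he0inj : Function.Injective e0 := by
    rw [injective_iff_map_eq_zero]
    rintro ⟨η, hη⟩ h
    apply Subtype.ext
    refine hxinj η (EPWaux.c_kill ξ V₅ hξ0 3 η hη) ?_
    have d4 := hdeg η hη
    refine hnd 4 (by norm_num) _ d4 (hxx _) fun u hu => ?_
    refine hnd 5 (by norm_num) _ (EPWaux.mul_mem_right 4 u d4)
      (by rw [← mul_assoc, hxx, zero_mul]) fun u' hu' => ?_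
    refine EPWaux.volC_zero 6 vol hvol.1
      (EPWaux.mul_mem_right 5 u' (EPWaux.mul_mem_right 4 u d4)) ?_
    have hw : ι ℂ u * ι ℂ u' ∈ EPW.extPow V V₅ 2 :=
      EPWaux.mul_mem V₅ 1 hu (by unfold EPW.extPow; rw [pow_one]; exact ⟨u', hu', rfl⟩)
    have := LinearMap.congr_fun h ⟨_, hw⟩
    rw [he0] at this
    simpa [mul_assoc] using this
  let e : EPW.extPow V V₅ 3 ≃ₗ[ℂ] Dual ℂ (EPW.extPow V V₅ 2) :=
    LinearEquiv.ofInjectiveOfFinrankEq e0 he0inj (by rw [Subspace.dual_finrank_eq, f2, f3])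
  have he : ∀ η w, e η w = EPW.volC V 6 vol (ι ℂ x * (η : ExteriorAlgebra ℂ V) * w) :=
    fun _ _ => rfl
  have hUle : EPW.vWedge V v V₅ ≤ EPW.extPow V V₅ 2 := by
    rintro _ ⟨_, ⟨u, hu, rfl⟩, rfl⟩
    exact EPWaux.mul_mem V₅ 1 hv (by unfold EPW.extPow; rw [pow_one]; exact ⟨u, hu, rfl⟩)
  let U : Submodule ℂ (EPW.extPow V V₅ 2) := (EPW.vWedge V v V₅).comap (Submodule.subtype _)
  have hU4 : finrank ℂ U = 4 := by
    have h1 : finrank ℂ U = finrank ℂ (EPW.vWedge V v V₅) :=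
      (Submodule.comapSubtypeEquivOfLe hUle).finrank_eq
    have h2 := EPWaux.finrank_vWedge v hv0 V₅ hv
    omega
  -- the annihilator of `U`
  have hann : ∀ η : EPW.extPow V V₅ 3, (∀ u ∈ U, e η u = 0) ↔
      ι ℂ v * (η : ExteriorAlgebra ℂ V) = 0 := by
    rintro ⟨η, hη⟩
    have d4 := hdeg η hη
    have hsw := EPWaux.comm_zero v V₅ 3 hη
    constructor
    · intro h
      rw [← hsw]
      refine hxinj _ ?_ ?_
      · rw [EPWaux.comm v V₅ 3 η hη, map_smul, EPWaux.c_mul, hξ0 v hv,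
          EPWaux.c_kill ξ V₅ hξ0 3 η hη]
        simp
      · rw [← mul_assoc]
        refine hnd 5 (by norm_num) _ (EPWaux.mul_mem_right 4 v d4)
          (by rw [← mul_assoc, hxx, zero_mul]) fun u hu => ?_
        refine EPWaux.volC_zero 6 vol hvol.1
          (EPWaux.mul_mem_right 5 u (EPWaux.mul_mem_right 4 v d4)) ?_
        have hm : ι ℂ v * ι ℂ u ∈ EPW.vWedge V v V₅ := ⟨_, ⟨u, hu, rfl⟩, rfl⟩
        have := h ⟨_, hUle hm⟩ hm
        rw [he] at this
        simpa [mul_assoc] using this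
    · rintro h ⟨_, hw⟩ ⟨_, ⟨u, hu, rfl⟩, rfl⟩
      rw [← hsw] at h
      change η * ι ℂ v = 0 at h
      rw [he]
      change EPW.volC V 6 vol (ι ℂ x * η * (ι ℂ v * ι ℂ u)) = 0
      rw [mul_assoc, ← mul_assoc η, h]
      simp
  let i : W →ₗ[ℂ] EPW.extPow V V₅ 2 := Submodule.inclusion hW
  have hi : Function.Injective i := Submodule.inclusion_injective hW
  have hUi : U.comap i = (EPW.vWedge V v V₅).comap W.subtype := rfl
  have hK : finrank ℂ (U.comap i) =
      finrank ℂ (W ⊓ EPW.vWedge V v V₅ : Submodule ℂ (ExteriorAlgebra ℂ V)) := by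
    rw [hUi, ← Submodule.map_comap_subtype]
    exact (Submodule.equivMapOfInjective _ W.injective_subtype _).finrank_eq
  let Φ : (EPW.extPow V V₅ 3 × W) →ₗ[ℂ] ExteriorAlgebra ℂ V :=
    (Submodule.subtype _).coprod (LinearMap.mulLeft ℂ (ι ℂ x) ∘ₗ W.subtype)
  have hΦ : ∀ p, Φ p = (p.1 : ExteriorAlgebra ℂ V) + ι ℂ x * (p.2 : ExteriorAlgebra ℂ V) :=
    fun _ => rfl
  have hcΦ : ∀ η ∈ EPW.extPow V V₅ 3, ∀ w ∈ W, EPWaux.c ξ (η + ι ℂ x * w) = w := by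
    intro η hη w hw
    rw [map_add, EPWaux.c_mul, EPWaux.c_kill ξ V₅ hξ0 3 η hη,
      EPWaux.c_kill ξ V₅ hξ0 2 w (hW hw), hξx]
    simp
  have hΦinj : Function.Injective Φ := by
    rintro ⟨η, w⟩ ⟨η', w'⟩ h
    rw [hΦ, hΦ] at h
    have h1 := congrArg (EPWaux.c ξ) h
    rw [hcΦ _ η.2 _ w.2, hcΦ _ η'.2 _ w'.2] at h1
    have h2 : w = w' := Subtype.ext h1
    subst h2
    have h3 : η = η' := Subtype.ext (add_right_cancel h)
    rw [h3]
  let S := (EPW.AWq V vol x V₅ W q ⊓ EPW.Fv V v).comap Φ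
  have hSfin : finrank ℂ S =
      finrank ℂ (EPW.AWq V vol x V₅ W q ⊓ EPW.Fv V v : Submodule ℂ (ExteriorAlgebra ℂ V)) := by
    rw [(Submodule.equivMapOfInjective Φ hΦinj S).finrank_eq]
    have : S.map Φ = EPW.AWq V vol x V₅ W q ⊓ EPW.Fv V v := by
      rw [Submodule.map_comap_eq]
      refine inf_eq_right.2 ?_
      rintro z ⟨⟨w, η, hη, rfl, -⟩, -⟩
      exact ⟨(⟨η, hη⟩, w), rfl⟩
    rw [this]
  have hmain := absLA e i hi U q hq f2 hW7 hU4 (hK ▸ hWv v hv hv0) S ?_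
  · rw [hK, hSfin] at hmain
    exact hmain
  rintro ⟨⟨η, hη⟩, ⟨w, hw⟩⟩
  have hA : Φ (⟨η, hη⟩, ⟨w, hw⟩) ∈ EPW.AWq V vol x V₅ W q ↔
      ∀ t : W, e ⟨η, hη⟩ (i t) = - q ⟨w, hw⟩ t := by
    constructor
    · rintro ⟨w', η', hη', heq, hc⟩
      have h := @hΦinj (⟨η, hη⟩, ⟨w, hw⟩) (⟨η', hη'⟩, w') heq
      obtain ⟨h1, rfl⟩ := Prod.mk.inj h
      obtain rfl := Subtype.mk.inj h1
      exact hc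
    · intro h
      exact ⟨⟨w, hw⟩, η, hη, rfl, h⟩
  have hF : Φ (⟨η, hη⟩, ⟨w, hw⟩) ∈ EPW.Fv V v ↔
      w ∈ EPW.vWedge V v V₅ ∧ ι ℂ v * η = 0 := by
    rw [hΦ]
    change η + ι ℂ x * w ∈ _ ↔ _
    constructor
    · rintro ⟨ζ, hζ, hζ'⟩
      change ι ℂ v * ζ = η + ι ℂ x * w at hζ'
      have hζ2 : ζ ∈ EPW.extPow V ⊤ 2 := by rw [EPWaux.ext_top]; exact hζ
      have h1 := hcΦ η hη w hw
      rw [← hζ', EPWaux.c_mul, hξ0 v hv, zero_smul, zero_sub] at h1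
      have h2 := EPWaux.c_mem ξ ⊤ 1 ζ hζ2
      unfold EPW.extPow at h2
      rw [pow_one] at h2
      obtain ⟨y, -, hy⟩ := h2
      have hy5 : y ∈ V₅ := by
        rw [hξ]
        have h3 := EPWaux.c_c ξ ζ
        rw [← hy, EPWaux.c_ι] at h3
        exact (ExteriorAlgebra.algebraMap_eq_zero_iff V _).1 h3
      refine ⟨⟨ι ℂ (-y), ⟨-y, neg_mem hy5, rfl⟩, ?_⟩, ?_⟩
      · change ι ℂ v * ι ℂ (-y) = w
        rw [← h1, ← hy]; simp
      · have h4 : η = ι ℂ v * ζ - ι ℂ x * w := by rw [hζ']; abel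
        rw [h4, mul_sub, hvv, ← mul_assoc, EPWaux.swap v x, neg_mul, mul_assoc, ← h1, mul_neg,
          hvv]
        simp
    · rintro ⟨⟨_, ⟨u, hu, rfl⟩, rfl⟩, h⟩
      refine add_mem ?_ ?_
      · refine ⟨EPWaux.c φ η, ?_, ?_⟩
        · have := EPWaux.ext_mono V₅ 2 (EPWaux.c_mem φ V₅ 2 η hη)
          rwa [EPWaux.ext_top] at this
        · have h1 := congrArg (EPWaux.c φ) h
          rw [EPWaux.c_mul, hφ, one_smul, map_zero, sub_eq_zero] at h1
          exact h1.symm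
      · refine ⟨- (ι ℂ x * ι ℂ u), ?_, ?_⟩
        · have := EPWaux.mul_mem_right 1 u (z := ι ℂ x)
            (by unfold EPW.extPow; rw [pow_one]; exact ⟨x, trivial, rfl⟩)
          rw [EPWaux.ext_top] at this
          exact neg_mem this
        · change ι ℂ v * -(ι ℂ x * ι ℂ u) = ι ℂ x * (ι ℂ v * ι ℂ u)
          rw [← mul_assoc (ι ℂ x), EPWaux.swap x v, mul_neg, neg_mul, mul_assoc]
  change (Φ _ ∈ EPW.AWq V vol x V₅ W q ∧ Φ _ ∈ EPW.Fv V v) ↔ _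
  rw [hA, hF, hann]
  change _ ↔ (w ∈ EPW.vWedge V v V₅ ∧ ι ℂ v * η = 0 ∧ _)
  tauto
end
end

section
/- Suppose dim W = 7 and that dim(W ∩ (v∧V₅)) ≤ 2 for every nonzero v ∈ V₅. Then the assignment ℂv ↦ W ∩ (v∧V₅) defines a bijection from the set of one-dimensional subspaces ℂv of V₅ such that dim(A(W,q) ∩ F_v) ≥ 3 onto the set of two-dimensional subspaces L of W such that L ⊆ v′∧V₅ for some nonzero v′ ∈ V₅ and q vanishes identically on L × L. -/
open ExteriorAlgebra Module

noncomputable section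

namespace EPWaux

open EPW

variable {V : Type} [AddCommGroup V] [Module ℂ V]

/-- contraction of the exterior algebra by a linear form -/
abbrev con (d : Module.Dual ℂ V) : ExteriorAlgebra ℂ V →ₗ[ℂ] ExteriorAlgebra ℂ V :=
  CliffordAlgebra.contractLeft (Q := (0 : QuadraticForm ℂ V)) d

lemma con_mul (d : Module.Dual ℂ V) (a : V) (b : ExteriorAlgebra ℂ V) :
    con d (ExteriorAlgebra.ι ℂ a * b) = d a • b - ExteriorAlgebra.ι ℂ a * con d b :=
  CliffordAlgebra.contractLeft_ι_mul (Q := (0 : QuadraticForm ℂ V)) d a b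

lemma ι_mul_mem {U : Submodule ℂ V} {k : ℕ} {u : V} (hu : u ∈ U) {θ : ExteriorAlgebra ℂ V}
    (hθ : θ ∈ extPow V U k) : ExteriorAlgebra.ι ℂ u * θ ∈ extPow V U (k + 1) := by
  unfold extPow
  rw [pow_succ']
  exact Submodule.mul_mem_mul (Submodule.mem_map_of_mem hu) hθ

lemma ext_induct {U : Submodule ℂ V} {C : ℕ → ExteriorAlgebra ℂ V → Prop}
    (h0 : ∀ r : ℂ, C 0 (algebraMap _ _ r))
    (hadd : ∀ i a b, C i a → C i b → C i (a + b))
    (hmul : ∀ u ∈ U, ∀ i, ∀ θ ∈ extPow V U i, C i θ → C (i + 1) (ExteriorAlgebra.ι ℂ u * θ))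
    {k : ℕ} {θ : ExteriorAlgebra ℂ V} (hθ : θ ∈ extPow V U k) : C k θ := by
  refine Submodule.pow_induction_on_left' (Submodule.map (ExteriorAlgebra.ι ℂ) U)
    (C := fun n a _ => C n a) h0 (fun a b i _ _ => hadd i a b) ?_ hθ
  rintro m ⟨u, hu, rfl⟩ i θ hθ h
  exact hmul u hu i θ hθ h

/-- contraction by a form vanishing on `U` kills the exterior algebra of `U` -/
lemma con_zero {U : Submodule ℂ V} {d : Module.Dual ℂ V} (hd : ∀ u ∈ U, d u = 0) {k : ℕ}
    {θ : ExteriorAlgebra ℂ V} (hθ : θ ∈ extPow V U k) : con d θ = 0 := by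
  refine ext_induct (C := fun _ θ => con d θ = 0) ?_ ?_ ?_ hθ
  · intro r; exact CliffordAlgebra.contractLeft_algebraMap _ d r
  · intro i a b ha hb; rw [map_add, ha, hb, add_zero]
  · intro u hu i θ _ h; rw [con_mul, h, hd u hu]; simp

lemma con_mem {U : Submodule ℂ V} (d : Module.Dual ℂ V) {k : ℕ}
    {θ : ExteriorAlgebra ℂ V} (hθ : θ ∈ extPow V U (k + 1)) : con d θ ∈ extPow V U k := by
  have := ext_induct (U := U) (C := fun n θ => (n = 0 → con d θ = 0) ∧
    ∀ m, n = m + 1 → con d θ ∈ extPow V U m) ?_ ?_ ?_ hθ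
  · exact this.2 k rfl
  · intro r
    exact ⟨fun _ => CliffordAlgebra.contractLeft_algebraMap _ d r, fun m h => by omega⟩
  · intro i a b ha hb
    refine ⟨fun h => by rw [map_add, ha.1 h, hb.1 h, add_zero], fun m h => ?_⟩
    rw [map_add]; exact add_mem (ha.2 m h) (hb.2 m h)
  · intro u hu i θ hθ h
    refine ⟨fun h => by omega, fun m hm => ?_⟩
    obtain rfl : i = m := by omega
    rw [con_mul]
    refine sub_mem (Submodule.smul_mem _ _ hθ) ?_
    rcases i with _ | i
    · rw [h.1 rfl]; simp
    · exact ι_mul_mem hu (h.2 i rfl)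

lemma ι_anti (u v : V) : ExteriorAlgebra.ι ℂ u * ExteriorAlgebra.ι ℂ v
    = - (ExteriorAlgebra.ι ℂ v * ExteriorAlgebra.ι ℂ u) := by
  have := ExteriorAlgebra.ι_add_mul_swap (R := ℂ) u v
  exact eq_neg_of_add_eq_zero_left this

lemma ι_comm {U : Submodule ℂ V} (u : V) {k : ℕ}
    {θ : ExteriorAlgebra ℂ V} (hθ : θ ∈ extPow V U k) :
    θ * ExteriorAlgebra.ι ℂ u = (-1 : ℂ) ^ k • (ExteriorAlgebra.ι ℂ u * θ) := by
  refine ext_induct (C := fun k θ => θ * ExteriorAlgebra.ι ℂ u =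
    (-1 : ℂ) ^ k • (ExteriorAlgebra.ι ℂ u * θ)) ?_ ?_ ?_ hθ
  · intro r; rw [pow_zero, one_smul]; exact Algebra.commutes r _
  · intro i a b ha hb; rw [add_mul, ha, hb, mul_add, smul_add]
  · intro v hv i θ _ h
    rw [mul_assoc, h, mul_smul_comm, ← mul_assoc, ← mul_assoc, ι_anti v u, pow_succ]
    simp

lemma euler {I : Type} [Fintype I] {U : Submodule ℂ V} (e : I → V) (d : I → Module.Dual ℂ V)
    (h : ∀ u ∈ U, ∑ i, d i u • e i = u) {k : ℕ}
    {θ : ExteriorAlgebra ℂ V} (hθ : θ ∈ extPow V U k) :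
    ∑ i, ExteriorAlgebra.ι ℂ (e i) * con (d i) θ = (k : ℂ) • θ := by
  refine ext_induct (C := fun k θ => ∑ i, ExteriorAlgebra.ι ℂ (e i) * con (d i) θ = (k : ℂ) • θ)
    ?_ ?_ ?_ hθ
  · intro r
    have : ∀ i, con (d i) (algebraMap ℂ _ r) = 0 :=
      fun i => CliffordAlgebra.contractLeft_algebraMap _ (d i) r
    simp [this]
  · intro i a b ha hb
    simp only [map_add, mul_add, Finset.sum_add_distrib, ha, hb, smul_add]
  · intro u hu k θ _ ih
    have h1 : ∀ i, ExteriorAlgebra.ι ℂ (e i) * con (d i) (ExteriorAlgebra.ι ℂ u * θ)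
        = ExteriorAlgebra.ι ℂ (d i u • e i) * θ
          + ExteriorAlgebra.ι ℂ u * (ExteriorAlgebra.ι ℂ (e i) * con (d i) θ) := by
      intro i
      rw [con_mul, mul_sub, ← mul_assoc, ι_anti (e i) u, map_smul, mul_smul_comm, smul_mul_assoc,
        ← mul_assoc, neg_mul, sub_neg_eq_add]
    rw [Finset.sum_congr rfl (fun i _ => h1 i), Finset.sum_add_distrib, ← Finset.sum_mul,
      ← map_sum, h u hu, ← Finset.mul_sum, ih, mul_smul_comm]
    push_cast
    rw [add_smul, one_smul, add_comm]

lemma exists_dual (U : Submodule ℂ V) [FiniteDimensional ℂ U] :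
    ∃ (e : Fin (finrank ℂ U) → V) (d : Fin (finrank ℂ U) → Module.Dual ℂ V),
    (∀ i, e i ∈ U) ∧ (∀ i, d i (e i) = 1) ∧ (∀ u ∈ U, ∑ i, d i u • e i = u) := by
  obtain ⟨p, hp⟩ := U.subtype.exists_leftInverse_of_injective (by simp)
  have hp' : ∀ u : U, p u = u := fun u => LinearMap.congr_fun hp u
  let b := finBasis ℂ U
  refine ⟨fun i => b i, fun i => b.coord i ∘ₗ p, fun i => (b i).2, ?_, ?_⟩
  · intro i; simp [hp']
  · intro u hu
    have := b.sum_repr ⟨u, hu⟩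
    have h2 := congrArg Subtype.val this
    simp only [Submodule.coe_sum, Submodule.coe_smul] at h2
    simpa [hp' ⟨u, hu⟩] using h2

/-- descent -/
lemma descent {U : Submodule ℂ V} [FiniteDimensional ℂ U] {k : ℕ} (hk : k < finrank ℂ U)
    {θ : ExteriorAlgebra ℂ V} (hθ : θ ∈ extPow V U k)
    (h : ∀ u ∈ U, θ * ExteriorAlgebra.ι ℂ u = 0) : θ = 0 := by
  obtain ⟨e, d, he, hd, hs⟩ := exists_dual U
  have h1 : ∀ u ∈ U, ExteriorAlgebra.ι ℂ u * θ = 0 := by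
    intro u hu
    have := h u hu
    rw [ι_comm u hθ] at this
    exact (smul_eq_zero.1 this).resolve_left (pow_ne_zero _ (by norm_num))
  have h2 := euler e d hs hθ
  have h3 : ∀ i, ExteriorAlgebra.ι ℂ (e i) * con (d i) θ = θ := by
    intro i
    have := con_mul (d i) (e i) θ
    rw [h1 _ (he i), map_zero, hd, one_smul] at this
    exact (sub_eq_zero.1 this.symm).symm
  rw [Finset.sum_congr rfl (fun i _ => h3 i)] at h2
  simp only [Finset.sum_const, Finset.card_univ, Fintype.card_fin] at h2
  rw [← Nat.cast_smul_eq_nsmul ℂ, ← sub_eq_zero, ← sub_smul] at h2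
  refine (smul_eq_zero.1 h2).resolve_left ?_
  rw [sub_eq_zero]
  exact_mod_cast hk.ne'

lemma extPow_le {U : Submodule ℂ V} (k : ℕ) : extPow V U k ≤ ⋀[ℂ]^k V := by
  unfold extPow
  exact pow_le_pow_left' LinearMap.map_le_range k

lemma volC_eq {k : ℕ} (vol : ⋀[ℂ]^k V →ₗ[ℂ] ℂ) {z : ExteriorAlgebra ℂ V} (hz : z ∈ ⋀[ℂ]^k V) :
    volC V k vol z = vol ⟨z, hz⟩ := by
  unfold volC
  simp only [LinearMap.comp_apply, LinearEquiv.coe_coe, DirectSum.decomposeLinearEquiv_apply]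
  rw [DirectSum.decompose_of_mem (fun i : ℕ => ⋀[ℂ]^i V) hz]
  congr 1
  exact DirectSum.component.lof_self ℂ _ _

/-- A linear form vanishing on `U` with value one at `x`. -/
lemma exists_form {U : Submodule ℂ V} {x : V} (hx : x ∉ U) :
    ∃ d : Module.Dual ℂ V, (∀ u ∈ U, d u = 0) ∧ d x = 1 := by
  obtain ⟨f, hf, hU⟩ := Submodule.exists_le_ker_of_notMem hx
  refine ⟨(f x)⁻¹ • f, fun u hu => ?_, ?_⟩
  · have : f u = 0 := hU hu
    simp [this]
  · simp [hf]

lemma finrank_extPow (U : Submodule ℂ V) [FiniteDimensional ℂ U] (k : ℕ) :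
    finrank ℂ (extPow V U k) = (finrank ℂ U).choose k := by
  have hinj : Function.Injective (ExteriorAlgebra.map U.subtype) :=
    ExteriorAlgebra.map_injective_field (by simp)
  have : extPow V U k = Submodule.map (ExteriorAlgebra.map U.subtype).toLinearMap (⋀[ℂ]^k U) := by
    unfold extPow ExteriorAlgebra.exteriorPower
    rw [Submodule.map_pow]
    congr 1
    ext z
    simp
  rw [this, ← exteriorPower.finrank_eq (R := ℂ) (M := U) (n := k)]
  exact (Submodule.equivMapOfInjective _ hinj _).finrank_eq.symm

instance fin_extPow (U : Submodule ℂ V) [FiniteDimensional ℂ U] (k : ℕ) :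
    FiniteDimensional ℂ (extPow V U k) := by
  have : (Submodule.map (ExteriorAlgebra.ι ℂ) U).FG :=
    Submodule.FG.map _ ((Submodule.fg_iff_finiteDimensional U).2 inferInstance)
  exact Module.Finite.iff_fg.2 (this.pow k)


lemma top_kill {U : Submodule ℂ V} {x : V} (hx : x ∉ U) (vol : ⋀[ℂ]^6 V →ₗ[ℂ] ℂ)
    (hvol : Function.Bijective vol) {θ : ExteriorAlgebra ℂ V} (hθ : θ ∈ extPow V U 5)
    (h : volC V 6 vol (ExteriorAlgebra.ι ℂ x * θ) = 0) : θ = 0 := by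
  have hmem : ExteriorAlgebra.ι ℂ x * θ ∈ ⋀[ℂ]^6 V := by
    unfold ExteriorAlgebra.exteriorPower
    rw [pow_succ']
    exact Submodule.mul_mem_mul ⟨x, rfl⟩ (extPow_le 5 hθ)
  rw [volC_eq vol hmem] at h
  have h1 := hvol.1 (h.trans (map_zero vol).symm)
  have h2 : ExteriorAlgebra.ι ℂ x * θ = 0 := congrArg Subtype.val h1
  obtain ⟨d, hd, hdx⟩ := exists_form hx
  have h3 := con_mul d x θ
  rw [h2, con_zero hd hθ, hdx] at h3
  simpa using h3.symm

lemma mul_ι_mem {U : Submodule ℂ V} {k : ℕ} {u : V} (hu : u ∈ U) {θ : ExteriorAlgebra ℂ V}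
    (hθ : θ ∈ extPow V U k) : θ * ExteriorAlgebra.ι ℂ u ∈ extPow V U (k + 1) := by
  unfold extPow
  rw [pow_succ]
  exact Submodule.mul_mem_mul hθ (Submodule.mem_map_of_mem hu)

lemma kill {U : Submodule ℂ V} (hU : finrank ℂ U = 5) {x : V} (hx : x ∉ U)
    (vol : ⋀[ℂ]^6 V →ₗ[ℂ] ℂ) (hvol : Function.Bijective vol) (j : ℕ) :
    ∀ k, k + j = 5 → ∀ θ ∈ extPow V U k,
    (∀ σ ∈ extPow V U j, volC V 6 vol (ExteriorAlgebra.ι ℂ x * θ * σ) = 0) → θ = 0 := by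
  have : FiniteDimensional ℂ U := FiniteDimensional.of_finrank_eq_succ hU
  induction j with
  | zero =>
    intro k hk θ hθ h
    obtain rfl : k = 5 := by omega
    refine top_kill hx vol hvol hθ ?_
    have := h 1 (by unfold extPow; rw [pow_zero]; exact Submodule.one_le.1 le_rfl)
    rwa [mul_one] at this
  | succ j ih =>
    intro k hk θ hθ h
    refine descent (by omega) hθ fun u hu => ?_
    refine ih (k + 1) (by omega) _ (mul_ι_mem hu hθ) fun σ hσ => ?_
    have := h _ (ι_mul_mem hu hσ)
    rwa [← mul_assoc, mul_assoc (ExteriorAlgebra.ι ℂ x)] at this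

/-- the pairing between `⋀³U` and `⋀²U` -/
def pair (U : Submodule ℂ V) (x : V) (vol : ⋀[ℂ]^6 V →ₗ[ℂ] ℂ) :
    extPow V U 3 →ₗ[ℂ] Module.Dual ℂ (extPow V U 2) :=
  LinearMap.mk₂ ℂ (fun η w => volC V 6 vol
      (ExteriorAlgebra.ι ℂ x * (η : ExteriorAlgebra ℂ V) * (w : ExteriorAlgebra ℂ V)))
    (fun a b c => by rw [Submodule.coe_add, mul_add, add_mul, map_add])
    (fun r a b => by rw [Submodule.coe_smul, mul_smul_comm, smul_mul_assoc, map_smul])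
    (fun a b c => by rw [Submodule.coe_add, mul_add, map_add])
    (fun r a b => by rw [Submodule.coe_smul, mul_smul_comm, map_smul])

lemma pair_apply (U : Submodule ℂ V) (x : V) (vol : ⋀[ℂ]^6 V →ₗ[ℂ] ℂ) (η : extPow V U 3)
    (w : extPow V U 2) : pair U x vol η w = volC V 6 vol
      (ExteriorAlgebra.ι ℂ x * (η : ExteriorAlgebra ℂ V) * (w : ExteriorAlgebra ℂ V)) := rfl

lemma pair_bij {U : Submodule ℂ V} (hU : finrank ℂ U = 5) {x : V} (hx : x ∉ U)
    (vol : ⋀[ℂ]^6 V →ₗ[ℂ] ℂ) (hvol : Function.Bijective vol) :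
    Function.Bijective (pair U x vol) := by
  have : FiniteDimensional ℂ U := FiniteDimensional.of_finrank_eq_succ hU
  have hinj : Function.Injective (pair U x vol) := by
    rw [← LinearMap.ker_eq_bot, LinearMap.ker_eq_bot']
    intro η hη
    apply Subtype.ext
    refine kill hU hx vol hvol 2 3 rfl _ η.2 fun σ hσ => ?_
    exact LinearMap.congr_fun hη ⟨σ, hσ⟩
  refine ⟨hinj, ?_⟩
  refine (LinearMap.injective_iff_surjective_of_finrank_eq_finrank ?_).1 hinj
  rw [Subspace.dual_finrank_eq, finrank_extPow, finrank_extPow, hU]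
  rfl

lemma wedge_exact {U : Submodule ℂ V} {v : V} (hv0 : v ≠ 0) {k : ℕ} {θ : ExteriorAlgebra ℂ V}
    (hθ : θ ∈ extPow V U (k + 1)) (h : ExteriorAlgebra.ι ℂ v * θ = 0) :
    ∃ σ ∈ extPow V U k, ExteriorAlgebra.ι ℂ v * σ = θ := by
  obtain ⟨d, -, hd⟩ := exists_form (U := ⊥) (x := v) (by simpa using hv0)
  refine ⟨con d θ, con_mem d hθ, ?_⟩
  have := con_mul d v θ
  rw [h, map_zero, hd, one_smul] at this
  exact (sub_eq_zero.1 this.symm).symm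

lemma mem_vWedge {U : Submodule ℂ V} {v : V} {w : ExteriorAlgebra ℂ V} :
    w ∈ vWedge V v U ↔ ∃ u ∈ U, ExteriorAlgebra.ι ℂ v * ExteriorAlgebra.ι ℂ u = w := by
  simp [vWedge]

lemma vWedge_le {U : Submodule ℂ V} {v : V} (hv : v ∈ U) : vWedge V v U ≤ extPow V U 2 := by
  intro w hw
  obtain ⟨u, hu, rfl⟩ := mem_vWedge.1 hw
  refine ι_mul_mem hv ?_
  unfold extPow
  rw [pow_one]
  exact Submodule.mem_map_of_mem hu

lemma mem_vWedge_of {U : Submodule ℂ V} {v : V} (hv0 : v ≠ 0) {w : ExteriorAlgebra ℂ V}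
    (hw : w ∈ extPow V U 2) (h : ExteriorAlgebra.ι ℂ v * w = 0) : w ∈ vWedge V v U := by
  obtain ⟨σ, hσ, rfl⟩ := wedge_exact hv0 (k := 1) hw h
  unfold extPow at hσ
  rw [pow_one] at hσ
  obtain ⟨u, hu, rfl⟩ := hσ
  exact mem_vWedge.2 ⟨u, hu, rfl⟩

lemma sq (v : V) (z : ExteriorAlgebra ℂ V) :
    ExteriorAlgebra.ι ℂ v * (ExteriorAlgebra.ι ℂ v * z) = 0 := by
  rw [← mul_assoc, ExteriorAlgebra.ι_sq_zero, zero_mul]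

lemma ι_wedge_zero {v u : V} (hv0 : v ≠ 0)
    (h : ExteriorAlgebra.ι ℂ v * ExteriorAlgebra.ι ℂ u = 0) : ∃ c : ℂ, c • v = u := by
  obtain ⟨d, -, hd⟩ := exists_form (U := ⊥) (x := v) (by simpa using hv0)
  have := con_mul d v (ExteriorAlgebra.ι ℂ u)
  rw [h, map_zero, hd, one_smul, show con d (ExteriorAlgebra.ι ℂ u) = algebraMap ℂ _ (d u) from
    CliffordAlgebra.contractLeft_ι _ d u] at this
  refine ⟨d u, ?_⟩
  apply ExteriorAlgebra.ι_leftInverse (R := ℂ) (M := V) |>.injective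
  rw [map_smul, sub_eq_zero.1 this.symm, ← Algebra.commutes, Algebra.smul_def]

lemma finrank_vWedge_s10 {U : Submodule ℂ V} (hU : finrank ℂ U = 5) {v : V} (hv : v ∈ U)
    (hv0 : v ≠ 0) : finrank ℂ (vWedge V v U) = 4 := by
  have : FiniteDimensional ℂ U := FiniteDimensional.of_finrank_eq_succ hU
  let f : U →ₗ[ℂ] ExteriorAlgebra ℂ V :=
    LinearMap.mulLeft ℂ (ExteriorAlgebra.ι ℂ v) ∘ₗ ExteriorAlgebra.ι ℂ ∘ₗ U.subtype
  have hr : LinearMap.range f = vWedge V v U := by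
    simp only [f, LinearMap.range_comp, Submodule.range_subtype, vWedge]
  have hk : LinearMap.ker f = ℂ ∙ (⟨v, hv⟩ : U) := by
    ext u
    rw [LinearMap.mem_ker, Submodule.mem_span_singleton]
    constructor
    · intro h
      obtain ⟨c, hc⟩ := ι_wedge_zero (v := v) (u := (u : V)) hv0 h
      exact ⟨c, Subtype.ext hc⟩
    · rintro ⟨c, rfl⟩
      simp [f]
  have := f.finrank_range_add_finrank_ker
  rw [hr, hk, finrank_span_singleton (by simpa using hv0), hU] at this
  omega

/-- the annihilator of `v ∧ U` -/
lemma perp {U : Submodule ℂ V} (hU : finrank ℂ U = 5) {x : V} (hx : x ∉ U)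
    (vol : ⋀[ℂ]^6 V →ₗ[ℂ] ℂ) (hvol : Function.Bijective vol) {v : V} (hv : v ∈ U)
    (hv0 : v ≠ 0)
    {η : ExteriorAlgebra ℂ V} (hη : η ∈ extPow V U 3)
    (h : ∀ w ∈ vWedge V v U, volC V 6 vol (ExteriorAlgebra.ι ℂ x * η * w) = 0) :
    ∃ σ ∈ extPow V U 2, ExteriorAlgebra.ι ℂ v * σ = η := by
  refine wedge_exact hv0 hη ?_
  have h1 : η * ExteriorAlgebra.ι ℂ v = 0 := by
    refine kill hU hx vol hvol 1 4 rfl _ (mul_ι_mem hv hη) fun σ hσ => ?_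
    unfold extPow at hσ
    rw [pow_one] at hσ
    obtain ⟨u, hu, rfl⟩ := hσ
    have := h _ (mem_vWedge.2 ⟨u, hu, rfl⟩)
    rwa [← mul_assoc, mul_assoc (ExteriorAlgebra.ι ℂ x)] at this
  rw [ι_comm v hη] at h1
  exact (smul_eq_zero.1 h1).resolve_left (pow_ne_zero _ (by norm_num))

lemma perp' {U : Submodule ℂ V} {v : V} {σ w : ExteriorAlgebra ℂ V} (hσ : σ ∈ extPow V U 2)
    (hw : w ∈ vWedge V v U) : ExteriorAlgebra.ι ℂ v * σ * w = 0 := by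
  obtain ⟨u, hu, rfl⟩ := mem_vWedge.1 hw
  rw [mul_assoc, ← mul_assoc σ, ι_comm v hσ, smul_mul_assoc, mul_smul_comm, mul_assoc, sq,
    smul_zero]

variable {U : Submodule ℂ V} {x : V} {vol : ⋀[ℂ]^6 V →ₗ[ℂ] ℂ}
  {W : Submodule ℂ (ExteriorAlgebra ℂ V)} {q : W →ₗ[ℂ] W →ₗ[ℂ] ℂ}

lemma mem_K (hx : x ∉ U) (hW : W ≤ extPow V U 2) {v : V} (hv : v ∈ U) (hv0 : v ≠ 0)
    {z : ExteriorAlgebra ℂ V} :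
    z ∈ AWq V vol x U W q ⊓ Fv V v ↔ ∃ w : W, ∃ σ ∈ extPow V U 2,
      (w : ExteriorAlgebra ℂ V) ∈ vWedge V v U ∧
      z = ExteriorAlgebra.ι ℂ v * σ + ExteriorAlgebra.ι ℂ x * (w : ExteriorAlgebra ℂ V) ∧
      ∀ w' : W, volC V 6 vol (ExteriorAlgebra.ι ℂ x * (ExteriorAlgebra.ι ℂ v * σ) *
        (w' : ExteriorAlgebra ℂ V)) = - q w w' := by
  constructor
  · rintro ⟨⟨w, η, hη, rfl, hc⟩, hF⟩
    obtain ⟨ζ, -, hζ⟩ := hF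
    have h0 : ExteriorAlgebra.ι ℂ v * (η + ExteriorAlgebra.ι ℂ x * (w : ExteriorAlgebra ℂ V)) = 0 := by
      rw [← hζ]; exact sq v ζ
    have h1 : ExteriorAlgebra.ι ℂ v * η =
        ExteriorAlgebra.ι ℂ x * (ExteriorAlgebra.ι ℂ v * (w : ExteriorAlgebra ℂ V)) := by
      rw [mul_add, ← mul_assoc, ι_anti v x, neg_mul, mul_assoc] at h0
      exact add_neg_eq_zero.1 h0
    obtain ⟨d, hd, hdx⟩ := exists_form hx
    have h2 := con_mul d x (ExteriorAlgebra.ι ℂ v * (w : ExteriorAlgebra ℂ V))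
    rw [← h1, con_zero hd (ι_mul_mem hv hη), con_zero hd (ι_mul_mem hv (hW w.2)), hdx, mul_zero,
      one_smul, sub_zero] at h2
    rw [← h2, mul_zero] at h1
    obtain ⟨σ, hσ, rfl⟩ := wedge_exact hv0 hη h1
    exact ⟨w, σ, hσ, mem_vWedge_of hv0 (hW w.2) h2.symm, rfl, hc⟩
  · rintro ⟨w, σ, hσ, hw, rfl, hc⟩
    refine ⟨⟨w, _, ι_mul_mem hv hσ, rfl, hc⟩, ?_⟩
    obtain ⟨u, hu, h⟩ := mem_vWedge.1 hw
    refine ⟨σ - ExteriorAlgebra.ι ℂ x * ExteriorAlgebra.ι ℂ u, sub_mem (extPow_le 2 hσ) ?_, ?_⟩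
    · unfold ExteriorAlgebra.exteriorPower
      rw [pow_two]
      exact Submodule.mul_mem_mul ⟨x, rfl⟩ ⟨u, rfl⟩
    · rw [← h, LinearMap.mulLeft_apply, mul_sub, ← mul_assoc _ (ExteriorAlgebra.ι ℂ x), ι_anti v x,
        neg_mul, sub_neg_eq_add, mul_assoc]

lemma con_K {d : Module.Dual ℂ V} (hd : ∀ u ∈ U, d u = 0) (hdx : d x = 1)
    (hW : W ≤ extPow V U 2) {v : V} (hv : v ∈ U) (w : W) {σ : ExteriorAlgebra ℂ V}
    (hσ : σ ∈ extPow V U 2) :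
    con d (ExteriorAlgebra.ι ℂ v * σ + ExteriorAlgebra.ι ℂ x * (w : ExteriorAlgebra ℂ V))
      = w := by
  rw [map_add, con_zero hd (ι_mul_mem hv hσ), con_mul, con_zero hd (hW w.2), hdx]
  simp

lemma fin_K (hdim : finrank ℂ V = 6) (v : V) :
    FiniteDimensional ℂ (AWq V vol x U W q ⊓ Fv V v : Submodule ℂ (ExteriorAlgebra ℂ V)) := by
  have : FiniteDimensional ℂ V := FiniteDimensional.of_finrank_eq_succ hdim
  have : FiniteDimensional ℂ (Fv V v) := by
    unfold Fv; infer_instance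
  exact Submodule.finiteDimensional_inf_right _ _

/-- projection of `A ∩ F_v` to `W` -/
abbrev proj (x : V) (U : Submodule ℂ V) (vol : ⋀[ℂ]^6 V →ₗ[ℂ] ℂ)
    (W : Submodule ℂ (ExteriorAlgebra ℂ V)) (q : W →ₗ[ℂ] W →ₗ[ℂ] ℂ) (d : Module.Dual ℂ V)
    (v : V) :
    (AWq V vol x U W q ⊓ Fv V v : Submodule ℂ (ExteriorAlgebra ℂ V)) →ₗ[ℂ] ExteriorAlgebra ℂ V :=
  (con d).domRestrict _

lemma range_le (hx : x ∉ U) {d : Module.Dual ℂ V} (hd : ∀ u ∈ U, d u = 0) (hdx : d x = 1)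
    (hW : W ≤ extPow V U 2) {v : V} (hv : v ∈ U) (hv0 : v ≠ 0) :
    LinearMap.range (proj x U vol W q d v) ≤ W ⊓ vWedge V v U := by
  rintro _ ⟨⟨z, hz⟩, rfl⟩
  obtain ⟨w, σ, hσ, hw, rfl, hc⟩ := (mem_K hx hW hv hv0).1 hz
  have : proj x U vol W q d v ⟨_, hz⟩ = w := con_K hd hdx hW hv w hσ
  rw [this]
  exact ⟨w.2, hw⟩

lemma ker_dim (hU : finrank ℂ U = 5) (hx : x ∉ U) (hvol : Function.Bijective vol)
    {d : Module.Dual ℂ V} (hd : ∀ u ∈ U, d u = 0) (hdx : d x = 1)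
    (hW : W ≤ extPow V U 2) {v : V} (hv : v ∈ U) (hv0 : v ≠ 0) :
    finrank ℂ (LinearMap.ker (proj x U vol W q d v)) +
      finrank ℂ (W ⊔ vWedge V v U : Submodule ℂ (ExteriorAlgebra ℂ V)) = 10 := by
  have : FiniteDimensional ℂ U := FiniteDimensional.of_finrank_eq_succ hU
  set N : Submodule ℂ (ExteriorAlgebra ℂ V) := W ⊔ vWedge V v U with hN
  have hNle : N ≤ extPow V U 2 := sup_le hW (vWedge_le hv)
  let N' : Submodule ℂ (extPow V U 2) := N.comap (extPow V U 2).subtype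
  have hN' : finrank ℂ N' = finrank ℂ N :=
    (Submodule.comapSubtypeEquivOfLe hNle).finrank_eq
  let C : Submodule ℂ (extPow V U 3) := N'.dualAnnihilator.comap (pair U x vol)
  have hC : finrank ℂ C = finrank ℂ N'.dualAnnihilator := by
    let e := LinearEquiv.ofBijective (pair U x vol) (pair_bij hU hx vol hvol)
    have h1 : C.map (e : extPow V U 3 →ₗ[ℂ] _) = N'.dualAnnihilator :=
      Submodule.map_comap_eq_of_surjective (pair_bij hU hx vol hvol).2 _
    rw [← h1]
    exact (LinearEquiv.finrank_map_eq e C).symm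
  have hmem : ∀ η : extPow V U 3, η ∈ C ↔
      ∀ n ∈ N, volC V 6 vol (ExteriorAlgebra.ι ℂ x * (η : ExteriorAlgebra ℂ V) * n) = 0 := by
    intro η
    simp only [C, Submodule.mem_comap, Submodule.mem_dualAnnihilator]
    constructor
    · intro h n hn
      exact h ⟨n, hNle hn⟩ hn
    · intro h n hn
      exact h n hn
  have key : (LinearMap.ker (proj x U vol W q d v)).map (Submodule.subtype _)
      = C.map (Submodule.subtype _) := by
    ext z
    constructor
    · rintro ⟨⟨z, hz⟩, hker, rfl⟩
      obtain ⟨w, σ, hσ, hw, rfl, hc⟩ := (mem_K hx hW hv hv0).1 hz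
      have h1 : proj x U vol W q d v ⟨_, hz⟩ = w := con_K hd hdx hW hv w hσ
      have h2 : (w : ExteriorAlgebra ℂ V) = 0 := h1.symm.trans hker
      have h3 : w = 0 := Subtype.ext h2
      subst h3
      refine ⟨⟨_, ι_mul_mem hv hσ⟩, ?_, by simp⟩
      refine (hmem _).2 fun n hn => ?_
      obtain ⟨a, ha, b, hb, rfl⟩ := Submodule.mem_sup.1 hn
      rw [mul_add, map_add, mul_assoc _ _ b, perp' hσ hb, mul_zero, map_zero, add_zero]
      simpa using hc ⟨a, ha⟩
    · rintro ⟨η, hη, rfl⟩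
      have hη' := (hmem _).1 hη
      obtain ⟨σ, hσ, h⟩ := perp hU hx vol hvol hv hv0 η.2
        (fun w hw => hη' w (Submodule.mem_sup_right hw))
      have hz : (η : ExteriorAlgebra ℂ V) ∈ AWq V vol x U W q ⊓ Fv V v := by
        refine (mem_K hx hW hv hv0).2 ⟨0, σ, hσ, zero_mem _, by simp [h], fun w' => ?_⟩
        rw [h, hη' _ (Submodule.mem_sup_left w'.2)]
        simp
      refine ⟨⟨η, hz⟩, ?_, rfl⟩
      exact con_zero hd η.2
  have h1 := Submodule.finrank_map_subtype_eq _ (LinearMap.ker (proj x U vol W q d v))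
  have h2 := Submodule.finrank_map_subtype_eq _ C
  rw [key, h2, hC] at h1
  have h3 := Subspace.finrank_add_finrank_dualAnnihilator_eq N'
  rw [finrank_extPow, hU, hN', h1] at h3
  rw [add_comm, h3]
  rfl

lemma count (hdim : finrank ℂ V = 6) (hU : finrank ℂ U = 5) (hx : x ∉ U)
    (hvol : Function.Bijective vol)
    {d : Module.Dual ℂ V} (hd : ∀ u ∈ U, d u = 0) (hdx : d x = 1)
    (hW : W ≤ extPow V U 2) (hW7 : finrank ℂ W = 7) {v : V} (hv : v ∈ U) (hv0 : v ≠ 0) :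
    finrank ℂ (AWq V vol x U W q ⊓ Fv V v : Submodule ℂ (ExteriorAlgebra ℂ V)) + 1 =
      finrank ℂ (LinearMap.range (proj x U vol W q d v)) +
      finrank ℂ (W ⊓ vWedge V v U : Submodule ℂ (ExteriorAlgebra ℂ V)) := by
  have : FiniteDimensional ℂ U := FiniteDimensional.of_finrank_eq_succ hU
  have : FiniteDimensional ℂ W := FiniteDimensional.of_finrank_eq_succ hW7
  have h4 := finrank_vWedge_s10 hU hv hv0
  have : FiniteDimensional ℂ (vWedge V v U) := FiniteDimensional.of_finrank_eq_succ h4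
  have := fin_K (x := x) (U := U) (W := W) (q := q) (vol := vol) hdim v
  have h1 := ker_dim (q := q) hU hx hvol hd hdx hW hv hv0
  have h2 := Submodule.finrank_sup_add_finrank_inf_eq W (vWedge V v U)
  have h3 := (proj x U vol W q d v).finrank_range_add_finrank_ker
  omega

lemma lift (hU : finrank ℂ U = 5) (hx : x ∉ U) (hvol : Function.Bijective vol)
    {d : Module.Dual ℂ V} (hd : ∀ u ∈ U, d u = 0) (hdx : d x = 1)
    (hW : W ≤ extPow V U 2) {v : V} (hv : v ∈ U) (hv0 : v ≠ 0) (w : W)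
    (hw : (w : ExteriorAlgebra ℂ V) ∈ vWedge V v U)
    (hq : ∀ b : W, (b : ExteriorAlgebra ℂ V) ∈ vWedge V v U → q w b = 0) :
    (w : ExteriorAlgebra ℂ V) ∈ LinearMap.range (proj x U vol W q d v) := by
  let φ : W →ₗ[ℂ] (ExteriorAlgebra ℂ V ⧸ vWedge V v U) := (vWedge V v U).mkQ ∘ₗ W.subtype
  have h1 : -(q w) ∈ LinearMap.range φ.dualMap := by
    rw [LinearMap.range_dualMap_eq_dualAnnihilator_ker, Submodule.mem_dualAnnihilator]
    intro b hb
    have : (b : ExteriorAlgebra ℂ V) ∈ vWedge V v U := by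
      have : (vWedge V v U).mkQ (b : ExteriorAlgebra ℂ V) = 0 := hb
      simpa using this
    simp [hq b this]
  obtain ⟨g, hg⟩ := h1
  obtain ⟨η, hη⟩ := (pair_bij hU hx vol hvol).2
    (g ∘ₗ (vWedge V v U).mkQ ∘ₗ (extPow V U 2).subtype)
  have hη' : ∀ n ∈ extPow V U 2,
      volC V 6 vol (ExteriorAlgebra.ι ℂ x * (η : ExteriorAlgebra ℂ V) * n)
        = g ((vWedge V v U).mkQ n) := fun n hn => LinearMap.congr_fun hη ⟨n, hn⟩
  obtain ⟨σ, hσ, h⟩ := perp hU hx vol hvol hv hv0 η.2 (fun n hn => by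
    rw [hη' n (vWedge_le hv hn), show (vWedge V v U).mkQ n = 0 by simpa using hn, map_zero])
  have hz : ExteriorAlgebra.ι ℂ v * σ + ExteriorAlgebra.ι ℂ x * (w : ExteriorAlgebra ℂ V)
      ∈ AWq V vol x U W q ⊓ Fv V v := by
    refine (mem_K hx hW hv hv0).2 ⟨w, σ, hσ, hw, rfl, fun w' => ?_⟩
    rw [h, hη' _ (hW w'.2)]
    exact LinearMap.congr_fun hg w'
  exact ⟨⟨_, hz⟩, con_K hd hdx hW hv w hσ⟩

lemma q_zero (hx : x ∉ U) {d : Module.Dual ℂ V} (hd : ∀ u ∈ U, d u = 0) (hdx : d x = 1)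
    (hW : W ≤ extPow V U 2) {v : V} (hv : v ∈ U) (hv0 : v ≠ 0) (a b : W)
    (ha : (a : ExteriorAlgebra ℂ V) ∈ LinearMap.range (proj x U vol W q d v))
    (hb : (b : ExteriorAlgebra ℂ V) ∈ vWedge V v U) : q a b = 0 := by
  obtain ⟨⟨z, hz⟩, h⟩ := ha
  obtain ⟨w, σ, hσ, hw, rfl, hc⟩ := (mem_K hx hW hv hv0).1 hz
  have h1 : proj x U vol W q d v ⟨_, hz⟩ = w := con_K hd hdx hW hv w hσ
  obtain rfl : a = w := Subtype.ext (h.symm.trans h1)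
  have := hc b
  rw [mul_assoc, perp' hσ hb, mul_zero, map_zero] at this
  exact neg_eq_zero.1 this.symm

/-- a two-dimensional space inside `v ∧ U` determines the line of `v` -/
lemma line_unique {v v' : V} (hv0 : v ≠ 0) (hv0' : v' ≠ 0)
    {L : Submodule ℂ (ExteriorAlgebra ℂ V)} (hL : finrank ℂ L = 2)
    (h : L ≤ vWedge V v U) (h' : L ≤ vWedge V v' U) : (ℂ ∙ v) = (ℂ ∙ v') := by
  by_cases hvv : ∃ c : ℂ, c • v = v'
  · obtain ⟨c, rfl⟩ := hvv
    have hc : c ≠ 0 := by rintro rfl; simp at hv0'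
    exact (Submodule.span_singleton_smul_eq (IsUnit.mk0 c hc) v).symm
  exfalso
  have hle : L ≤ ℂ ∙ (ExteriorAlgebra.ι ℂ v * ExteriorAlgebra.ι ℂ v') := by
    intro z hz
    obtain ⟨u, hu, rfl⟩ := mem_vWedge.1 (h hz)
    obtain ⟨u', hu', hh⟩ := mem_vWedge.1 (h' hz)
    have hnot : v' ∉ (ℂ ∙ v) := fun hm => hvv (Submodule.mem_span_singleton.1 hm)
    obtain ⟨d, hd, hd1⟩ := exists_form hnot
    have hdv : d v = 0 := hd v (Submodule.mem_span_singleton_self v)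
    have e1 := con_mul d v (ExteriorAlgebra.ι ℂ u)
    have e2 := con_mul d v' (ExteriorAlgebra.ι ℂ u')
    have e3 : ∀ t : V, con d (ExteriorAlgebra.ι ℂ t) = algebraMap ℂ _ (d t) :=
      fun t => CliffordAlgebra.contractLeft_ι _ d t
    rw [hdv, e3, ← Algebra.commutes, ← Algebra.smul_def, ← map_smul] at e1
    rw [hd1, e3, ← Algebra.commutes, ← Algebra.smul_def, ← map_smul, hh, e1] at e2
    have e4 : ExteriorAlgebra.ι ℂ u' = ExteriorAlgebra.ι ℂ (d u' • v' - d u • v) := by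
      rw [zero_smul, map_zero, zero_sub, one_smul] at e2
      rw [map_sub, map_smul, map_smul, sub_eq_add_neg, e2]; abel
    rw [← hh, e4, map_sub, mul_sub, map_smul, map_smul, mul_smul_comm, mul_smul_comm,
      ExteriorAlgebra.ι_sq_zero, smul_zero, zero_sub, ι_anti v' v, smul_neg, neg_neg]
    exact Submodule.smul_mem _ _ (Submodule.mem_span_singleton_self _)
  have h1 := Submodule.finrank_mono hle
  have h2 := finrank_span_le_card (R := ℂ)
    ({ExteriorAlgebra.ι ℂ v * ExteriorAlgebra.ι ℂ v'} : Set (ExteriorAlgebra ℂ V))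
  simp at h2
  omega

end EPWaux

theorem stmt10 (V : Type) [AddCommGroup V] [Module ℂ V]
    (hdim : finrank ℂ V = 6)
    (vol : ⋀[ℂ]^6 V →ₗ[ℂ] ℂ) (hvol : Function.Bijective vol)
    (V₅ : Submodule ℂ V) (hV₅ : finrank ℂ V₅ = 5)
    (x : V) (hx : x ∉ V₅)
    (W : Submodule ℂ (ExteriorAlgebra ℂ V)) (hW : W ≤ EPW.extPow V V₅ 2)
    (q : W →ₗ[ℂ] W →ₗ[ℂ] ℂ) (hq : ∀ a b : W, q a b = q b a)
    (hW7 : finrank ℂ W = 7)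
    (hWv : ∀ v ∈ V₅, v ≠ 0 →
      finrank ℂ (W ⊓ EPW.vWedge V v V₅ : Submodule ℂ (ExteriorAlgebra ℂ V)) ≤ 2) :
    (∀ v ∈ V₅, v ≠ 0 →
      3 ≤ finrank ℂ (EPW.AWq V vol x V₅ W q ⊓ EPW.Fv V v : Submodule ℂ (ExteriorAlgebra ℂ V)) →
      (W ⊓ EPW.vWedge V v V₅ ≤ W ∧
        finrank ℂ (W ⊓ EPW.vWedge V v V₅ : Submodule ℂ (ExteriorAlgebra ℂ V)) = 2 ∧
        (∃ v' ∈ V₅, v' ≠ 0 ∧ W ⊓ EPW.vWedge V v V₅ ≤ EPW.vWedge V v' V₅) ∧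
        (∀ a b : W, (a : ExteriorAlgebra ℂ V) ∈ W ⊓ EPW.vWedge V v V₅ →
          (b : ExteriorAlgebra ℂ V) ∈ W ⊓ EPW.vWedge V v V₅ → q a b = 0))) ∧
    (∀ v ∈ V₅, ∀ v'' ∈ V₅, v ≠ 0 → v'' ≠ 0 →
      3 ≤ finrank ℂ (EPW.AWq V vol x V₅ W q ⊓ EPW.Fv V v : Submodule ℂ (ExteriorAlgebra ℂ V)) →
      3 ≤ finrank ℂ
        (EPW.AWq V vol x V₅ W q ⊓ EPW.Fv V v'' : Submodule ℂ (ExteriorAlgebra ℂ V)) →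
      W ⊓ EPW.vWedge V v V₅ = W ⊓ EPW.vWedge V v'' V₅ →
      (ℂ ∙ v) = (ℂ ∙ v'')) ∧
    (∀ L : Submodule ℂ (ExteriorAlgebra ℂ V),
      L ≤ W → finrank ℂ L = 2 →
      (∃ v' ∈ V₅, v' ≠ 0 ∧ L ≤ EPW.vWedge V v' V₅) →
      (∀ a b : W, (a : ExteriorAlgebra ℂ V) ∈ L → (b : ExteriorAlgebra ℂ V) ∈ L → q a b = 0) →
      ∃ v ∈ V₅, v ≠ 0 ∧
        3 ≤ finrank ℂ
          (EPW.AWq V vol x V₅ W q ⊓ EPW.Fv V v : Submodule ℂ (ExteriorAlgebra ℂ V)) ∧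
        W ⊓ EPW.vWedge V v V₅ = L) := by
  obtain ⟨d, hd, hdx⟩ := EPWaux.exists_form hx
  have finW : FiniteDimensional ℂ W := FiniteDimensional.of_finrank_eq_succ hW7
  have main : ∀ v ∈ V₅, v ≠ 0 →
      3 ≤ finrank ℂ (EPW.AWq V vol x V₅ W q ⊓ EPW.Fv V v : Submodule ℂ (ExteriorAlgebra ℂ V)) →
      finrank ℂ (W ⊓ EPW.vWedge V v V₅ : Submodule ℂ (ExteriorAlgebra ℂ V)) = 2 ∧
      LinearMap.range (EPWaux.proj x V₅ vol W q d v) = W ⊓ EPW.vWedge V v V₅ := by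
    intro v hv hv0 h3
    have hc := EPWaux.count (q := q) hdim hV₅ hx hvol hd hdx hW hW7 hv hv0
    have hle := EPWaux.range_le (vol := vol) (q := q) hx hd hdx hW hv hv0
    have h2 := hWv v hv hv0
    have : FiniteDimensional ℂ (W ⊓ EPW.vWedge V v V₅ : Submodule ℂ (ExteriorAlgebra ℂ V)) :=
      Submodule.finiteDimensional_inf_left _ _
    have h1 := Submodule.finrank_mono hle
    refine ⟨by omega, Submodule.eq_of_le_of_finrank_le hle (by omega)⟩
  refine ⟨?_, ?_, ?_⟩
  · intro v hv hv0 h3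
    obtain ⟨h2, hr⟩ := main v hv hv0 h3
    refine ⟨inf_le_left, h2, ⟨v, hv, hv0, inf_le_right⟩, fun a b ha hb => ?_⟩
    exact EPWaux.q_zero hx hd hdx hW hv hv0 a b (hr ▸ ha) hb.2
  · intro v hv v' hv' hv0 hv0' h3 h3' heq
    exact EPWaux.line_unique hv0 hv0' (main v hv hv0 h3).1 inf_le_right
      (heq.le.trans inf_le_right)
  · rintro L hLW hL2 ⟨v, hv, hv0, hLv⟩ hqL
    have : FiniteDimensional ℂ (W ⊓ EPW.vWedge V v V₅ : Submodule ℂ (ExteriorAlgebra ℂ V)) :=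
      Submodule.finiteDimensional_inf_left _ _
    have hLe : L = W ⊓ EPW.vWedge V v V₅ :=
      Submodule.eq_of_le_of_finrank_le (le_inf hLW hLv) (by rw [hL2]; exact hWv v hv hv0)
    have hr : LinearMap.range (EPWaux.proj x V₅ vol W q d v) = W ⊓ EPW.vWedge V v V₅ := by
      refine le_antisymm (EPWaux.range_le hx hd hdx hW hv hv0) ?_
      rintro w ⟨hw, hwv⟩
      refine EPWaux.lift hV₅ hx hvol hd hdx hW hv hv0 ⟨w, hw⟩ hwv fun b hb => ?_
      exact hqL _ _ (hLe ▸ ⟨hw, hwv⟩) (hLe ▸ ⟨b.2, hb⟩)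
    have hc := EPWaux.count (q := q) hdim hV₅ hx hvol hd hdx hW hW7 hv hv0
    refine ⟨v, hv, hv0, ?_, hLe.symm⟩
    rw [hr, ← hLe, hL2] at hc
    omega
end
end
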